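/- arXiv:1807.02089 — 5 statements merged into one kernel-verified Lean document; each statement's English description precedes it below -/
import Mathlib

section
/- Let d ≥ 1, λ > 0, m ≥ 1, T ≥ 1 and δ ∈ (0,1). On a probability space, let θ ∈ ℝ^d with ‖θ‖₂ ≤ 1, and let 𝓓 be a probability distribution on ℕ with τ_m := P_{D∼𝓓}(D ≤ m). For each round t = 1,…,T let A_t be a random vector in ℝ^d with ‖A_t‖₂ ≤ 1 and ⟨A_t,θ⟩ ∈ [0,1] almost surely; conditionally on (A_1,X_1,D_1,…,A_{t−1},X_{t−1},D_{t−1},A_t), the reward X_t ∈ {0,1} is Bernoulli with mean ⟨A_t,θ⟩; and D_t has law 𝓓 and is independent of (A_1,X_1,D_1,…,A_{t−1},X_{t−1},D_{t−1},A_t,X_t). Define the windowed least-squares estimator θ̂ᵂ_t = V_t(λ)^{-1} Σ_{s=1}^{t−1} X_s·1{D_s ≤ min(m, t−s)}·A_s. Then with probability at least 1 − 2δ, simultaneously for all t = 1,…,T: ‖θ̂ᵂ_t − τ_m·θ‖_{V_t(λ)} ≤ 2 f_{t,δ} + Σ_{s=max(1,t−m)}^{t−1} ‖A_s‖_{V_t(λ)^{-1}}.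 -/
open Finset Matrix MeasureTheory ProbabilityTheory

/-- `mnorm M x = √(xᵀ M x)`, the norm associated to a positive definite matrix `M`. -/
noncomputable def mnorm {d : ℕ} (M : Matrix (Fin d) (Fin d) ℝ) (x : Fin d → ℝ) : ℝ :=
  Real.sqrt (x ⬝ᵥ M.mulVec x)

/-- `Vmat A lam t = lam • I + ∑_{s=1}^{t-1} A_s A_sᵀ`. -/
noncomputable def Vmat {d : ℕ} (A : ℕ → Fin d → ℝ) (lam : ℝ) (t : ℕ) :
    Matrix (Fin d) (Fin d) ℝ :=
  lam • (1 : Matrix (Fin d) (Fin d) ℝ) + ∑ s ∈ Finset.Ico 1 t, vecMulVec (A s) (A s)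

/-- Exploration radius `f_{t,δ} = √λ + √(2 log(1/δ) + d log((dλ + t)/(dλ)))`. -/
noncomputable def fconf (d : ℕ) (lam δ : ℝ) (t : ℕ) : ℝ :=
  Real.sqrt lam +
    Real.sqrt (2 * Real.log (1 / δ) + d * Real.log ((d * lam + t) / (d * lam)))

/-- The σ-algebra generated by `A_1, X_1, D_1, …, A_{t-1}, X_{t-1}, D_{t-1}, A_t`. -/
def hist {Ω : Type*} {d : ℕ} (A : ℕ → Ω → Fin d → ℝ) (X : ℕ → Ω → ℝ)
    (D : ℕ → Ω → ℕ) (t : ℕ) : MeasurableSpace Ω :=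
  (⨆ s ∈ Finset.Ico 1 t,
      (MeasurableSpace.comap (A s) inferInstance ⊔
        MeasurableSpace.comap (X s) inferInstance ⊔
          MeasurableSpace.comap (D s) inferInstance)) ⊔
    MeasurableSpace.comap (A t) inferInstance

/-- The windowed least-squares estimator
`θ̂ᵂ_t = V_t(λ)⁻¹ ∑_{s=1}^{t-1} X_s · 1{D_s ≤ min(m, t-s)} · A_s`. -/
noncomputable def thetaHatW {Ω : Type*} {d : ℕ} (A : ℕ → Ω → Fin d → ℝ)
    (X : ℕ → Ω → ℝ) (D : ℕ → Ω → ℕ) (lam : ℝ) (m t : ℕ) (ω : Ω) : Fin d → ℝ :=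
  (Vmat (fun s => A s ω) lam t)⁻¹.mulVec
    (∑ s ∈ Finset.Ico 1 t,
      (X s ω * (if D s ω ≤ min m (t - s) then (1 : ℝ) else 0)) • A s ω)

/-!
Up to the bias `λ τ_m θ`, of `V_t⁻¹`-norm at most `√λ`, and the rewards of the last `m` rounds that
have not arrived yet, `V_t (θ̂ᵂ_t - τ_m θ)` is the sum `S_t = ∑_{s<t} η_s A_s` of the noises
`η_s = X_s 1{D_s ≤ m} - τ_m ⟨A_s, θ⟩`, which lie in `[-1, 1]` and have conditional mean zero. Let
`M_t = exp (‖S_t‖²_{V_t⁻¹} / 2) √(λ^d / det V_t)`. By the rank-one update formulas, `M_{t+1} / M_t`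
is the exponential of a convex quadratic in `η_t`. On `[-1, 1]` it lies below its chord, whose value
at `0` is at most `1` because `cosh v ≤ exp (v² / 2)`. Hence `M_t ≤ 1 + ∑_{s<t} G_s η_s` with `G_s`
known before `η_s`, and Doob's maximal inequality for this martingale bounds all `M_t` at once by
`1 / δ`, outside an event of probability at most `δ`. This bounds `‖S_t‖_{V_t⁻¹}` through
`det V_t`, which concavity of `log` on the eigenvalues compares with the trace.
-/

section Matrices

variable {n : Type*} {M : Matrix n n ℝ}

lemma posDef_add_vecMulVec_self [Finite n] (hM : M.PosDef) (a : n → ℝ) :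
    (M + vecMulVec a a).PosDef :=
  hM.add_posSemidef (by simpa using posSemidef_vecMulVec_self_star a)

variable [Fintype n]

lemma dotProduct_mulVec_comm_of_isHermitian (hM : M.IsHermitian) (x y : n → ℝ) :
    x ⬝ᵥ M *ᵥ y = y ⬝ᵥ M *ᵥ x := by
  have hsymm : Mᵀ = M := by simpa using hM.eq
  rw [dotProduct_mulVec, ← mulVec_transpose, hsymm, dotProduct_comm]

lemma vecMulVec_self_mulVec (a x : n → ℝ) : vecMulVec a a *ᵥ x = (a ⬝ᵥ x) • a := by
  rw [vecMulVec_mulVec, op_smul_eq_smul]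

variable [DecidableEq n]

lemma mulVec_inv_mulVec (hM : IsUnit M.det) (x : n → ℝ) : M *ᵥ (M⁻¹ *ᵥ x) = x := by
  rw [mulVec_mulVec, mul_nonsing_inv _ hM, one_mulVec]

lemma inv_mulVec_eq_of_mulVec_eq (hM : IsUnit M.det) {x y : n → ℝ} (h : M *ᵥ y = x) :
    M⁻¹ *ᵥ x = y := by
  rw [← h, mulVec_mulVec, nonsing_inv_mul _ hM, one_mulVec]

lemma det_add_vecMulVec_self (hM : IsUnit M.det) (a : n → ℝ) :
    (M + vecMulVec a a).det = M.det * (1 + a ⬝ᵥ M⁻¹ *ᵥ a) := by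
  rw [vecMulVec_eq Unit, det_add_replicateCol_mul_replicateRow hM]
  congr 1
  rw [det_unique, Matrix.add_apply, Matrix.mul_assoc, one_apply_eq]
  congr 1

lemma isUnit_det_of_posDef (hM : M.PosDef) : IsUnit M.det :=
  hM.det_pos.ne'.isUnit

lemma dotProduct_inv_mulVec_nonneg (hM : M.PosDef) (x : n → ℝ) : 0 ≤ x ⬝ᵥ M⁻¹ *ᵥ x := by
  simpa using hM.inv.posSemidef.dotProduct_mulVec_nonneg x

lemma dotProduct_inv_add_vecMulVec_self_mulVec (hM : M.PosDef) (a x : n → ℝ) (e : ℝ) :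
    (x + e • a) ⬝ᵥ (M + vecMulVec a a)⁻¹ *ᵥ (x + e • a) =
      x ⬝ᵥ M⁻¹ *ᵥ x + (e ^ 2 - (e - a ⬝ᵥ M⁻¹ *ᵥ x) ^ 2 / (1 + a ⬝ᵥ M⁻¹ *ᵥ a)) := by
  have hdet := isUnit_det_of_posDef hM
  have hw := dotProduct_inv_mulVec_nonneg hM a
  have hcomm := dotProduct_mulVec_comm_of_isHermitian hM.inv.isHermitian x a
  set w := a ⬝ᵥ M⁻¹ *ᵥ a
  set u := a ⬝ᵥ M⁻¹ *ᵥ x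
  have hinv : (M + vecMulVec a a)⁻¹ *ᵥ (x + e • a) =
      M⁻¹ *ᵥ x + ((e - u) / (1 + w)) • (M⁻¹ *ᵥ a) := by
    apply inv_mulVec_eq_of_mulVec_eq (isUnit_det_of_posDef (posDef_add_vecMulVec_self hM a))
    have hcoeff : (e - u) / (1 + w) + (u + (e - u) / (1 + w) * w) = e := by
      field_simp
      ring
    calc (M + vecMulVec a a) *ᵥ (M⁻¹ *ᵥ x + ((e - u) / (1 + w)) • (M⁻¹ *ᵥ a))
        = x + ((e - u) / (1 + w)) • a + (u + (e - u) / (1 + w) * w) • a := by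
          rw [add_mulVec, mulVec_add, mulVec_smul, mulVec_inv_mulVec hdet, mulVec_inv_mulVec hdet,
            vecMulVec_self_mulVec, dotProduct_add, dotProduct_smul, smul_eq_mul]
      _ = x + e • a := by rw [add_assoc, ← add_smul, hcoeff]
  rw [hinv]
  simp only [add_dotProduct, dotProduct_add, smul_dotProduct, dotProduct_smul, smul_eq_mul, hcomm]
  change x ⬝ᵥ M⁻¹ *ᵥ x + e * u + (e - u) / (1 + w) * (u + e * w) = _
  field_simp
  ring

lemma mul_dotProduct_inv_mulVec_le {c : ℝ} (hc : 0 ≤ c) (hM : IsUnit M.det)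
    (hcM : (M - c • (1 : Matrix n n ℝ)).PosSemidef) (x : n → ℝ) :
    c * (x ⬝ᵥ M⁻¹ *ᵥ x) ≤ x ⬝ᵥ x := by
  have hMy := mulVec_inv_mulVec hM x
  set y := M⁻¹ *ᵥ x
  have hyy : c * (y ⬝ᵥ y) ≤ x ⬝ᵥ y := by
    have h := hcM.dotProduct_mulVec_nonneg y
    rw [sub_mulVec, smul_mulVec, one_mulVec, hMy, dotProduct_sub, dotProduct_smul, smul_eq_mul,
      star_trivial, dotProduct_comm y x] at h
    linarith
  have hsq : 0 ≤ (x - c • y) ⬝ᵥ (x - c • y) := by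
    simpa using dotProduct_star_self_nonneg (x - c • y)
  simp only [sub_dotProduct, dotProduct_sub, smul_dotProduct, dotProduct_smul, smul_eq_mul,
    dotProduct_comm y x] at hsq
  nlinarith

lemma log_det_le_card_mul_log_trace_div_card [Nonempty n] (hM : M.PosDef) :
    Real.log M.det ≤ Fintype.card n * Real.log (M.trace / Fintype.card n) := by
  have hcard : (0 : ℝ) < Fintype.card n := by exact_mod_cast Fintype.card_pos
  have hdet : M.det = ∏ i, hM.isHermitian.eigenvalues i := by
    simpa using hM.isHermitian.det_eq_prod_eigenvalues
  have htrace : M.trace = ∑ i, hM.isHermitian.eigenvalues i := by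
    simpa using hM.isHermitian.trace_eq_sum_eigenvalues
  have jensen := strictConcaveOn_log_Ioi.concaveOn.le_map_sum (t := univ)
    (w := fun _ : n => (Fintype.card n : ℝ)⁻¹) (p := hM.isHermitian.eigenvalues)
    (fun _ _ => by positivity) (by simp [hcard.ne']) fun i _ => hM.eigenvalues_pos i
  simp only [smul_eq_mul, ← mul_sum] at jensen
  rwa [← Real.log_prod fun i _ => (hM.eigenvalues_pos i).ne', ← hdet, ← htrace,
    inv_mul_le_iff₀ hcard, inv_mul_eq_div] at jensen

end Matrices

section MatrixNorm

variable {d : ℕ} {M : Matrix (Fin d) (Fin d) ℝ}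

lemma mnorm_nonneg (M : Matrix (Fin d) (Fin d) ℝ) (x : Fin d → ℝ) : 0 ≤ mnorm M x :=
  Real.sqrt_nonneg _

lemma mnorm_smul (M : Matrix (Fin d) (Fin d) ℝ) (r : ℝ) (x : Fin d → ℝ) :
    mnorm M (r • x) = |r| * mnorm M x := by
  rw [mnorm, mnorm, ← Real.sqrt_sq_eq_abs, ← Real.sqrt_mul (sq_nonneg r), mulVec_smul,
    smul_dotProduct, dotProduct_smul, smul_smul, smul_eq_mul, sq]

open scoped MatrixOrder Matrix.Norms.L2Operator in
lemma mnorm_add_le (hM : M.PosSemidef) (x y : Fin d → ℝ) :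
    mnorm M (x + y) ≤ mnorm M x + mnorm M y := by
  obtain ⟨B, rfl⟩ := CStarAlgebra.nonneg_iff_eq_star_mul_self.mp hM.nonneg
  have hnorm (z : Fin d → ℝ) : mnorm (star B * B) z = ‖WithLp.toLp 2 (B *ᵥ z)‖ := by
    rw [mnorm, ← mulVec_mulVec, dotProduct_mulVec, star_eq_conjTranspose,
      conjTranspose_eq_transpose_of_trivial,
      vecMul_transpose, EuclideanSpace.norm_eq]
    simp [dotProduct, sq]
  simpa only [hnorm, mulVec_add, WithLp.toLp_add] using
    norm_add_le (WithLp.toLp 2 (B *ᵥ x)) (WithLp.toLp 2 (B *ᵥ y))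

lemma mnorm_sub_le (hM : M.PosSemidef) (x y : Fin d → ℝ) :
    mnorm M (x - y) ≤ mnorm M x + mnorm M y := by
  have hneg : mnorm M (-y) = mnorm M y := by simp [mnorm, mulVec_neg]
  rw [sub_eq_add_neg, ← hneg]
  exact mnorm_add_le hM x (-y)

lemma mnorm_sum_le (hM : M.PosSemidef) {ι : Type*} (s : Finset ι) (f : ι → Fin d → ℝ) :
    mnorm M (∑ i ∈ s, f i) ≤ ∑ i ∈ s, mnorm M (f i) :=
  le_sum_of_subadditive (mnorm M) (by simp [mnorm]) (mnorm_add_le hM) s f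

lemma mnorm_inv_mulVec (hM : IsUnit M.det) (x : Fin d → ℝ) :
    mnorm M (M⁻¹ *ᵥ x) = mnorm M⁻¹ x := by
  rw [mnorm, mnorm, mulVec_inv_mulVec hM, dotProduct_comm]

end MatrixNorm

section DesignMatrix

variable {d : ℕ} {lam : ℝ}

lemma Vmat_succ (a : ℕ → Fin d → ℝ) (lam : ℝ) {t : ℕ} (ht : 1 ≤ t) :
    Vmat a lam (t + 1) = Vmat a lam t + vecMulVec (a t) (a t) := by
  rw [Vmat, Vmat, sum_Ico_succ_top ht, add_assoc]

lemma Vmat_sub_smul_one_posSemidef (a : ℕ → Fin d → ℝ) (lam : ℝ) (t : ℕ) :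
    (Vmat a lam t - lam • (1 : Matrix (Fin d) (Fin d) ℝ)).PosSemidef := by
  rw [Vmat, add_sub_cancel_left]
  exact posSemidef_sum _ fun s _ => by simpa using posSemidef_vecMulVec_self_star (a s)

lemma Vmat_posDef (a : ℕ → Fin d → ℝ) (hlam : 0 < lam) (t : ℕ) : (Vmat a lam t).PosDef := by
  simpa using (PosDef.one.smul hlam).add_posSemidef (Vmat_sub_smul_one_posSemidef a lam t)

lemma Vmat_mulVec (a : ℕ → Fin d → ℝ) (lam : ℝ) (t : ℕ) (x : Fin d → ℝ) :
    Vmat a lam t *ᵥ x = lam • x + ∑ s ∈ Ico 1 t, (a s ⬝ᵥ x) • a s := by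
  simp only [Vmat, add_mulVec, smul_mulVec, one_mulVec, sum_mulVec, vecMulVec_self_mulVec]

lemma trace_Vmat_le {a : ℕ → Fin d → ℝ} {t : ℕ} (ha : ∀ s ∈ Ico 1 t, a s ⬝ᵥ a s ≤ 1) :
    (Vmat a lam t).trace ≤ d * lam + t := by
  have hsum : ∑ s ∈ Ico 1 t, a s ⬝ᵥ a s ≤ t :=
    calc ∑ s ∈ Ico 1 t, a s ⬝ᵥ a s ≤ ∑ _s ∈ Ico 1 t, (1 : ℝ) := sum_le_sum ha
      _ ≤ t := by simp
  simp only [Vmat, trace_add, trace_smul, trace_one, trace_sum, trace_vecMulVec, Fintype.card_fin,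
    smul_eq_mul]
  linarith

lemma log_det_Vmat_div_le (hd : 1 ≤ d) (hlam : 0 < lam) {a : ℕ → Fin d → ℝ} {t : ℕ}
    (ha : ∀ s ∈ Ico 1 t, a s ⬝ᵥ a s ≤ 1) :
    Real.log ((Vmat a lam t).det / lam ^ d) ≤ d * Real.log ((d * lam + t) / (d * lam)) := by
  have hd0 : (0 : ℝ) < d := by exact_mod_cast hd
  have : Nonempty (Fin d) := ⟨0, hd⟩
  have hV := Vmat_posDef a hlam t
  have hdet : Real.log (Vmat a lam t).det ≤ d * Real.log ((Vmat a lam t).trace / d) := by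
    simpa using log_det_le_card_mul_log_trace_div_card hV
  have htrace : Real.log ((Vmat a lam t).trace / d) ≤ Real.log ((d * lam + t) / d) :=
    Real.log_le_log (div_pos hV.trace_pos hd0) (by gcongr; exact trace_Vmat_le ha)
  have hsplit : (d * lam + t) / (d * lam) = (d * lam + t) / d / lam := by rw [div_div]
  rw [hsplit, Real.log_div hV.det_pos.ne' (by positivity), Real.log_div (by positivity) hlam.ne',
    Real.log_pow, mul_sub]
  gcongr
  exact hdet.trans (by gcongr)

lemma lam_mul_mnorm_inv_Vmat_le_sqrt (hlam : 0 < lam) (a : ℕ → Fin d → ℝ) (t : ℕ)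
    {θ : Fin d → ℝ} (hθ : θ ⬝ᵥ θ ≤ 1) : lam * mnorm (Vmat a lam t)⁻¹ θ ≤ √lam := by
  have hle : lam * (θ ⬝ᵥ (Vmat a lam t)⁻¹ *ᵥ θ) ≤ 1 :=
    (mul_dotProduct_inv_mulVec_le hlam.le (isUnit_det_of_posDef (Vmat_posDef a hlam t))
      (Vmat_sub_smul_one_posSemidef a lam t) θ).trans hθ
  calc lam * mnorm (Vmat a lam t)⁻¹ θ
      = √lam * √(lam * (θ ⬝ᵥ (Vmat a lam t)⁻¹ *ᵥ θ)) := by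
        rw [Real.sqrt_mul hlam.le, ← mul_assoc, Real.mul_self_sqrt hlam.le, mnorm]
    _ ≤ √lam * 1 := by gcongr; exact Real.sqrt_le_one.2 hle
    _ = √lam := mul_one _

end DesignMatrix

section MixtureFactor

/-- The factor by which `gaussianMixture` grows in one round (see `gaussianMixture_succ`), as a
function of the new noise `x` and of `w = ‖a‖²_{V⁻¹}`, `u = ⟨a, V⁻¹ S⟩` for the new action `a`. -/
noncomputable def mixtureFactor (w u x : ℝ) : ℝ :=
  Real.exp ((x ^ 2 - (x - u) ^ 2 / (1 + w) - Real.log (1 + w)) / 2)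

/-- The slope of the chord of `mixtureFactor w u` over `[-1, 1]`. -/
noncomputable def mixtureSlope (w u : ℝ) : ℝ :=
  (mixtureFactor w u 1 - mixtureFactor w u (-1)) / 2

variable {w x : ℝ}

lemma mixtureFactor_le_exp_half (hw : 0 ≤ w) (u : ℝ) (hx : |x| ≤ 1) :
    mixtureFactor w u x ≤ Real.exp (1 / 2) := by
  have hsq : x ^ 2 ≤ 1 := (sq_le_one_iff_abs_le_one x).2 hx
  have hdiv : 0 ≤ (x - u) ^ 2 / (1 + w) := by positivity
  have hlog : 0 ≤ Real.log (1 + w) := Real.log_nonneg (by linarith)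
  exact Real.exp_le_exp.2 (by linarith)

lemma abs_mixtureSlope_le (hw : 0 ≤ w) (u : ℝ) : |mixtureSlope w u| ≤ Real.exp (1 / 2) := by
  have hone := mixtureFactor_le_exp_half hw u (x := 1) (by simp)
  have hneg := mixtureFactor_le_exp_half hw u (x := -1) (by simp)
  have hone_pos : 0 < mixtureFactor w u 1 := Real.exp_pos _
  have hneg_pos : 0 < mixtureFactor w u (-1) := Real.exp_pos _
  rw [mixtureSlope, abs_le]
  constructor <;> linarith

lemma mixtureFactor_midpoint_le_one (hw : 0 ≤ w) (u : ℝ) :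
    (mixtureFactor w u 1 + mixtureFactor w u (-1)) / 2 ≤ 1 := by
  set v := u / (1 + w) with hv
  set c := (1 - (1 + u ^ 2) / (1 + w) - Real.log (1 + w)) / 2 with hc
  have hone : mixtureFactor w u 1 = Real.exp c * Real.exp v := by
    rw [mixtureFactor, ← Real.exp_add, hc, hv]
    ring_nf
  have hneg : mixtureFactor w u (-1) = Real.exp c * Real.exp (-v) := by
    rw [mixtureFactor, ← Real.exp_add, hc, hv]
    ring_nf
  have hexponent : c + v ^ 2 / 2 ≤ 0 := by
    have hlog := Real.one_sub_inv_le_log_of_pos (x := 1 + w) (by positivity)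
    have hvsq : v ^ 2 ≤ u ^ 2 / (1 + w) := by
      rw [hv, div_pow]
      gcongr
      nlinarith
    rw [hc, add_div, one_div]
    linarith
  calc (mixtureFactor w u 1 + mixtureFactor w u (-1)) / 2
      = Real.exp c * Real.cosh v := by rw [hone, hneg, Real.cosh_eq]; ring
    _ ≤ Real.exp c * Real.exp (v ^ 2 / 2) := by gcongr; exact Real.cosh_le_exp_half_sq v
    _ = Real.exp (c + v ^ 2 / 2) := (Real.exp_add _ _).symm
    _ ≤ 1 := Real.exp_le_one_iff.2 hexponent

lemma convexOn_mixtureFactor (hw : 0 ≤ w) (u : ℝ) : ConvexOn ℝ Set.univ (mixtureFactor w u) := by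
  have hquad : ConvexOn ℝ Set.univ fun y : ℝ =>
      (y ^ 2 - (y - u) ^ 2 / (1 + w) - Real.log (1 + w)) / 2 := by
    refine ⟨convex_univ, fun y _ z _ p q hp hq hpq => ?_⟩
    obtain rfl : q = 1 - p := by linarith
    have hgap : 0 ≤ (1 - (1 + w)⁻¹) * (p * (1 - p) * (y - z) ^ 2) :=
      mul_nonneg (sub_nonneg.2 (inv_le_one_of_one_le₀ (by linarith))) (by positivity)
    simp only [smul_eq_mul, div_eq_mul_inv]
    linarith
  exact ⟨convex_univ, fun y hy z hz p q hp hq hpq =>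
    (Real.exp_le_exp.2 (hquad.2 hy hz hp hq hpq)).trans
      (convexOn_exp.2 (Set.mem_univ _) (Set.mem_univ _) hp hq hpq)⟩

lemma mixtureFactor_le_chord (hw : 0 ≤ w) (u : ℝ) (hx : |x| ≤ 1) :
    mixtureFactor w u x ≤
      (mixtureFactor w u 1 + mixtureFactor w u (-1)) / 2 + mixtureSlope w u * x := by
  obtain ⟨hx₁, hx₂⟩ := abs_le.1 hx
  have hconv := (convexOn_mixtureFactor hw u).2 (Set.mem_univ 1) (Set.mem_univ (-1))
    (by linarith : 0 ≤ (1 + x) / 2) (by linarith : 0 ≤ (1 - x) / 2) (by ring)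
  have hpoint : (1 + x) / 2 * 1 + (1 - x) / 2 * -1 = x := by ring
  simp only [smul_eq_mul, hpoint] at hconv
  rw [mixtureSlope]
  linarith

lemma mixtureFactor_le_one_add (hw : 0 ≤ w) (u : ℝ) (hx : |x| ≤ 1) :
    mixtureFactor w u x ≤ 1 + mixtureSlope w u * x := by
  linarith [mixtureFactor_le_chord hw u hx, mixtureFactor_midpoint_le_one hw u]

end MixtureFactor

section GaussianMixture

variable {d : ℕ} {lam : ℝ}

/-- The sum `S_t = ∑_{s=1}^{t-1} e_s a_s` of the actions weighted by the noise. -/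
def noiseSum (a : ℕ → Fin d → ℝ) (e : ℕ → ℝ) (t : ℕ) : Fin d → ℝ :=
  ∑ s ∈ Ico 1 t, e s • a s

/-- The method-of-mixtures process `exp (‖S_t‖²_{V_t(λ)⁻¹} / 2) · √(λ^d / det V_t(λ))`, which is
the average of `exp (⟨x, S_t⟩ - ∑_{s<t} ⟨x, a_s⟩² / 2)` over `x ∼ 𝒩(0, λ⁻¹ I)`. -/
noncomputable def gaussianMixture (lam : ℝ) (a : ℕ → Fin d → ℝ) (e : ℕ → ℝ) (t : ℕ) : ℝ :=
  Real.exp ((noiseSum a e t ⬝ᵥ (Vmat a lam t)⁻¹ *ᵥ noiseSum a e t -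
    Real.log ((Vmat a lam t).det / lam ^ d)) / 2)

/-- The slope in the noise `e_t` of the linear upper bound on the increment of `gaussianMixture`
in round `t`; it does not depend on `e_t` itself. -/
noncomputable def mixtureGain (lam : ℝ) (a : ℕ → Fin d → ℝ) (e : ℕ → ℝ) (t : ℕ) : ℝ :=
  gaussianMixture lam a e t * mixtureSlope (a t ⬝ᵥ (Vmat a lam t)⁻¹ *ᵥ a t)
    (a t ⬝ᵥ (Vmat a lam t)⁻¹ *ᵥ noiseSum a e t)

lemma gaussianMixture_pos (lam : ℝ) (a : ℕ → Fin d → ℝ) (e : ℕ → ℝ) (t : ℕ) :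
    0 < gaussianMixture lam a e t :=
  Real.exp_pos _

lemma gaussianMixture_one (hlam : lam ≠ 0) (a : ℕ → Fin d → ℝ) (e : ℕ → ℝ) :
    gaussianMixture lam a e 1 = 1 := by
  simp [gaussianMixture, noiseSum, Vmat, hlam]

lemma gaussianMixture_succ (hlam : 0 < lam) (a : ℕ → Fin d → ℝ) (e : ℕ → ℝ) {t : ℕ}
    (ht : 1 ≤ t) :
    gaussianMixture lam a e (t + 1) = gaussianMixture lam a e t *
      mixtureFactor (a t ⬝ᵥ (Vmat a lam t)⁻¹ *ᵥ a t)
        (a t ⬝ᵥ (Vmat a lam t)⁻¹ *ᵥ noiseSum a e t) (e t) := by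
  have hV := Vmat_posDef a hlam t
  have hw := dotProduct_inv_mulVec_nonneg hV (a t)
  have hS : noiseSum a e (t + 1) = noiseSum a e t + e t • a t := sum_Ico_succ_top ht _
  have hlog : Real.log ((Vmat a lam (t + 1)).det / lam ^ d) =
      Real.log ((Vmat a lam t).det / lam ^ d) +
        Real.log (1 + a t ⬝ᵥ (Vmat a lam t)⁻¹ *ᵥ a t) := by
    rw [Vmat_succ a lam ht, det_add_vecMulVec_self (isUnit_det_of_posDef hV), mul_div_right_comm,
      Real.log_mul (div_pos hV.det_pos (by positivity)).ne' (by positivity)]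
  rw [gaussianMixture, gaussianMixture, mixtureFactor, ← Real.exp_add, hlog, hS,
    Vmat_succ a lam ht, dotProduct_inv_add_vecMulVec_self_mulVec hV]
  congr 1
  ring

lemma gaussianMixture_succ_le_add_mixtureGain (hlam : 0 < lam) (a : ℕ → Fin d → ℝ) {e : ℕ → ℝ}
    {t : ℕ} (ht : 1 ≤ t) (he : |e t| ≤ 1) :
    gaussianMixture lam a e (t + 1) ≤
      gaussianMixture lam a e t + mixtureGain lam a e t * e t := by
  have hw := dotProduct_inv_mulVec_nonneg (Vmat_posDef a hlam t) (a t)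
  rw [gaussianMixture_succ hlam a e ht, mixtureGain, mul_assoc, ← mul_one_add]
  exact mul_le_mul_of_nonneg_left (mixtureFactor_le_one_add hw _ he)
    (gaussianMixture_pos lam a e t).le

lemma gaussianMixture_le_one_add_sum (hlam : 0 < lam) (a : ℕ → Fin d → ℝ) {e : ℕ → ℝ} {n : ℕ}
    (he : ∀ k < n, |e (k + 1)| ≤ 1) :
    gaussianMixture lam a e (n + 1) ≤
      1 + ∑ k ∈ range n, mixtureGain lam a e (k + 1) * e (k + 1) := by
  induction n with
  | zero => simp [gaussianMixture_one hlam.ne']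
  | succ n ih =>
    have hstep := gaussianMixture_succ_le_add_mixtureGain hlam a n.succ_pos (he n n.lt_succ_self)
    rw [sum_range_succ]
    linarith [ih fun k hk => he k (by lia)]

lemma gaussianMixture_le_exp_half_pow (hlam : 0 < lam) (a : ℕ → Fin d → ℝ) {e : ℕ → ℝ} {n : ℕ}
    (he : ∀ k < n, |e (k + 1)| ≤ 1) :
    gaussianMixture lam a e (n + 1) ≤ Real.exp (1 / 2) ^ n := by
  induction n with
  | zero => simp [gaussianMixture_one hlam.ne']
  | succ n ih =>
    have hw := dotProduct_inv_mulVec_nonneg (Vmat_posDef a hlam (n + 1)) (a (n + 1))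
    rw [gaussianMixture_succ hlam a e n.succ_pos, pow_succ]
    exact mul_le_mul (ih fun k hk => he k (by lia))
      (mixtureFactor_le_exp_half hw _ (he n n.lt_succ_self)) (Real.exp_pos _).le (by positivity)

lemma abs_mixtureGain_le (hlam : 0 < lam) (a : ℕ → Fin d → ℝ) {e : ℕ → ℝ} {n : ℕ}
    (he : ∀ k < n, |e (k + 1)| ≤ 1) :
    |mixtureGain lam a e (n + 1)| ≤ Real.exp (1 / 2) ^ (n + 1) := by
  have hw := dotProduct_inv_mulVec_nonneg (Vmat_posDef a hlam (n + 1)) (a (n + 1))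
  rw [mixtureGain, abs_mul, abs_of_pos (gaussianMixture_pos lam a e _), pow_succ]
  exact mul_le_mul (gaussianMixture_le_exp_half_pow hlam a he) (abs_mixtureSlope_le hw _)
    (abs_nonneg _) (by positivity)

lemma mnorm_noiseSum_le_sqrt (a : ℕ → Fin d → ℝ) (e : ℕ → ℝ) {c : ℝ} {t : ℕ} (hc : 0 < c)
    (hmix : gaussianMixture lam a e t ≤ c) :
    mnorm (Vmat a lam t)⁻¹ (noiseSum a e t) ≤
      √(2 * Real.log c + Real.log ((Vmat a lam t).det / lam ^ d)) := by
  have hlog := (Real.le_log_iff_exp_le hc).2 hmix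
  exact Real.sqrt_le_sqrt (by linarith)

end GaussianMixture

section Measurability

variable {Ω : Type*} {mΩ : MeasurableSpace Ω} {n : Type*} [Fintype n]

lemma measurable_dotProduct {x y : Ω → n → ℝ} (hx : Measurable x) (hy : Measurable y) :
    Measurable fun ω => x ω ⬝ᵥ y ω :=
  Finset.measurable_sum _ fun i _ =>
    ((measurable_pi_apply i).comp hx).mul ((measurable_pi_apply i).comp hy)

lemma measurable_mulVec {V : Ω → Matrix n n ℝ} (hV : ∀ i j, Measurable fun ω => V ω i j)
    {x : Ω → n → ℝ} (hx : Measurable x) : Measurable fun ω => V ω *ᵥ x ω :=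
  measurable_pi_lambda _ fun i => measurable_dotProduct (measurable_pi_lambda _ (hV i)) hx

variable [DecidableEq n]

lemma measurable_det {V : Ω → Matrix n n ℝ} (hV : ∀ i j, Measurable fun ω => V ω i j) :
    Measurable fun ω => (V ω).det := by
  simp only [det_apply]
  exact Finset.measurable_sum _ fun σ _ =>
    (Finset.measurable_prod _ fun i _ => hV _ _).const_smul _

lemma measurable_inv_apply {V : Ω → Matrix n n ℝ} (hV : ∀ i j, Measurable fun ω => V ω i j)
    (i j : n) : Measurable fun ω => (V ω)⁻¹ i j := by
  simp only [Matrix.inv_def, Matrix.smul_apply, adjugate_apply, smul_eq_mul, Ring.inverse_eq_inv']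
  refine (measurable_det hV).inv.mul (measurable_det fun k l => ?_)
  simp only [updateRow_apply]
  split_ifs
  · exact measurable_const
  · exact hV k l

variable {d : ℕ} {a : ℕ → Ω → Fin d → ℝ} {e : ℕ → Ω → ℝ} {t : ℕ}

lemma measurable_Vmat_apply (lam : ℝ) (ha : ∀ s ∈ Ico 1 t, Measurable (a s)) (i j : Fin d) :
    Measurable fun ω => Vmat (fun s => a s ω) lam t i j := by
  simp only [Vmat, Matrix.add_apply, Matrix.sum_apply, vecMulVec_apply]
  exact measurable_const.add (Finset.measurable_sum _ fun s hs =>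
    ((measurable_pi_apply i).comp (ha s hs)).mul ((measurable_pi_apply j).comp (ha s hs)))

lemma measurable_noiseSum (ha : ∀ s ∈ Ico 1 t, Measurable (a s))
    (he : ∀ s ∈ Ico 1 t, Measurable (e s)) :
    Measurable fun ω => noiseSum (fun s => a s ω) (fun s => e s ω) t :=
  Finset.measurable_sum _ fun s hs => (he s hs).smul (ha s hs)

lemma measurable_gaussianMixture (lam : ℝ) (ha : ∀ s ∈ Ico 1 t, Measurable (a s))
    (he : ∀ s ∈ Ico 1 t, Measurable (e s)) :
    Measurable fun ω => gaussianMixture lam (fun s => a s ω) (fun s => e s ω) t := by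
  have hV := measurable_Vmat_apply lam ha
  have hS := measurable_noiseSum ha he
  exact (((measurable_dotProduct hS (measurable_mulVec (measurable_inv_apply hV) hS)).sub
    ((measurable_det hV).div_const _).log).div_const 2).exp

lemma measurable_mixtureSlope {w u : Ω → ℝ} (hw : Measurable w) (hu : Measurable u) :
    Measurable fun ω => mixtureSlope (w ω) (u ω) := by
  unfold mixtureSlope mixtureFactor
  fun_prop

lemma measurable_mixtureGain (lam : ℝ) {n : ℕ} (ha : ∀ k ≤ n, Measurable (a (k + 1)))
    (he : ∀ k < n, Measurable (e (k + 1))) :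
    Measurable fun ω => mixtureGain lam (fun s => a s ω) (fun s => e s ω) (n + 1) := by
  have ha' : ∀ s ∈ Ico 1 (n + 1), Measurable (a s) := fun s hs => by
    obtain ⟨k, rfl⟩ := Nat.exists_eq_add_of_le' (mem_Ico.1 hs).1
    exact ha k (by grind)
  have he' : ∀ s ∈ Ico 1 (n + 1), Measurable (e s) := fun s hs => by
    obtain ⟨k, rfl⟩ := Nat.exists_eq_add_of_le' (mem_Ico.1 hs).1
    exact he k (by grind)
  have hVinv := measurable_inv_apply (measurable_Vmat_apply lam ha')
  exact (measurable_gaussianMixture lam ha' he').mul <| measurable_mixtureSlope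
    (measurable_dotProduct (ha n le_rfl) (measurable_mulVec hVinv (ha n le_rfl)))
    (measurable_dotProduct (ha n le_rfl) (measurable_mulVec hVinv (measurable_noiseSum ha' he')))

end Measurability

section Martingales

variable {Ω : Type*} {mΩ : MeasurableSpace Ω} {P : Measure Ω}

lemma ofReal_one_sub_le_measure [IsProbabilityMeasure P] {s : Set Ω} {δ : ℝ} (hδ : 0 ≤ δ)
    (hs : P sᶜ ≤ ENNReal.ofReal δ) : ENNReal.ofReal (1 - δ) ≤ P s := by
  rw [ENNReal.ofReal_sub 1 hδ, ENNReal.ofReal_one, tsub_le_iff_right]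
  calc 1 = P Set.univ := measure_univ.symm
    _ ≤ P s + P sᶜ := measure_univ_le_add_compl s
    _ ≤ P s + ENNReal.ofReal δ := by gcongr

lemma condExp_mem_Icc [IsFiniteMeasure P] {F : MeasurableSpace Ω} (hF : F ≤ mΩ) {X : Ω → ℝ}
    (hXint : Integrable X P) {x y : ℝ} (hX : ∀ᵐ ω ∂P, X ω ∈ Set.Icc x y) :
    ∀ᵐ ω ∂P, P[X | F] ω ∈ Set.Icc x y := by
  have hlower := condExp_mono (m := F) (integrable_const x) hXint (hX.mono fun ω hω => hω.1)
  have hupper := condExp_mono (m := F) hXint (integrable_const y) (hX.mono fun ω hω => hω.2)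
  rw [condExp_const hF] at hlower hupper
  filter_upwards [hlower, hupper] with ω hxω hyω
  exact ⟨hxω, hyω⟩

lemma condExp_mul_of_indep [IsFiniteMeasure P] {F G : MeasurableSpace Ω} (hFG : F ≤ G)
    (hG : G ≤ mΩ) {X Y : Ω → ℝ} (hX : Measurable[G] X) (hXint : Integrable X P)
    (hY : Measurable[mΩ] Y) (hYint : Integrable Y P)
    (hindep : Indep (MeasurableSpace.comap Y inferInstance) G P) :
    P[X * Y | F] =ᵐ[P] P[X | F] * fun _ => P[Y] := by
  have hXY : IndepFun X Y P :=
    (IndepFun_iff_Indep ..).2 (indep_of_indep_of_le_right hindep hX.comap_le).symm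
  have hcondY : P[Y | G] =ᵐ[P] fun _ => P[Y] :=
    condExp_indep_eq hY.comap_le hG (comap_measurable Y).stronglyMeasurable hindep
  have hcondG : P[X * Y | G] =ᵐ[P] X * fun _ => P[Y] :=
    (condExp_mul_of_stronglyMeasurable_left hX.stronglyMeasurable
      (hXY.integrable_mul hXint hYint) hYint).trans (Filter.EventuallyEq.rfl.mul hcondY)
  calc P[X * Y | F] =ᵐ[P] P[P[X * Y | G] | F] := (condExp_condExp_of_le hFG hG).symm
    _ =ᵐ[P] P[X * fun _ => P[Y] | F] := condExp_congr_ae hcondG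
    _ =ᵐ[P] P[X | F] * fun _ => P[Y] :=
      condExp_mul_of_stronglyMeasurable_right stronglyMeasurable_const
        (hXint.mul_const _) hXint

variable {ℱ : Filtration ℕ mΩ}

lemma measure_exists_le_of_martingale [IsFiniteMeasure P] {f : ℕ → Ω → ℝ} (hf : Martingale f ℱ P)
    {n : ℕ} (hnonneg : 0 ≤ᵐ[P] f n) {c : ℝ} (hc : 0 < c) :
    P {ω | ∃ k ≤ n, c ≤ f k ω} ≤ ENNReal.ofReal (P[f 0] / c) := by
  have hsub : Submartingale (f⁺) ℱ P := hf.submartingale.pos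
  set s := {ω | (c.toNNReal : ℝ) ≤ (range (n + 1)).sup' nonempty_range_add_one fun k => f⁺ k ω}
  have hsubset : {ω | ∃ k ≤ n, c ≤ f k ω} ⊆ s := by
    rintro ω ⟨k, hk, hck⟩
    refine Finset.le_sup'_of_le (fun k => f⁺ k ω) (mem_range_succ_iff.2 hk) ?_
    rw [Real.coe_toNNReal c hc.le]
    exact hck.trans (le_posPart (f k ω))
  have hintegral : ∫ ω in s, f⁺ n ω ∂P ≤ P[f 0] :=
    calc ∫ ω in s, f⁺ n ω ∂P ≤ ∫ ω, f⁺ n ω ∂P :=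
          setIntegral_le_integral (hsub.integrable n) (ae_of_all P fun ω => posPart_nonneg (f n ω))
      _ = ∫ ω, f n ω ∂P :=
          integral_congr_ae (hnonneg.mono fun ω hω => posPart_eq_self.2 hω)
      _ = P[f 0] := by
          simpa using (hf.setIntegral_eq n.zero_le MeasurableSet.univ).symm
  have hdoob := maximal_ineq hsub (fun k ω => posPart_nonneg (f k ω)) (ε := c.toNNReal) n
  rw [ENNReal.ofReal_div_of_pos hc, ENNReal.le_div_iff_mul_le (by simp [hc]) (by simp), mul_comm]
  exact (mul_le_mul_right (measure_mono hsubset) _).trans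
    (hdoob.trans (ENNReal.ofReal_le_ofReal hintegral))

lemma martingale_one_add_sum_range_min [IsFiniteMeasure P] {g : ℕ → Ω → ℝ} {n : ℕ}
    (hmeas : ∀ k < n, Measurable[ℱ (k + 1)] (g k)) (hint : ∀ k < n, Integrable (g k) P)
    (hcond : ∀ k < n, P[g k | ℱ k] =ᵐ[P] 0) :
    Martingale (fun k ω => 1 + ∑ i ∈ range (min k n), g i ω) ℱ P := by
  refine martingale_of_condExp_sub_eq_zero_nat (fun k => ?_) (fun k => ?_) fun k => ?_
  · refine (measurable_const.add (Finset.measurable_sum _ fun i hi => ?_)).stronglyMeasurable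
    obtain ⟨hik, hin⟩ := lt_min_iff.1 (mem_range.1 hi)
    exact (hmeas i hin).mono (ℱ.mono hik) le_rfl
  · exact (integrable_const 1).add (integrable_finsetSum _ fun i hi =>
      hint i (lt_min_iff.1 (mem_range.1 hi)).2)
  · rcases lt_or_ge k n with hk | hk
    · convert hcond k hk using 2
      ext ω
      simp [min_eq_left hk.le, min_eq_left (Nat.succ_le_of_lt hk), sum_range_succ]
    · simp [min_eq_right hk, min_eq_right (hk.trans k.le_succ)]

lemma measure_exists_le_one_add_sum [IsProbabilityMeasure P] {g : ℕ → Ω → ℝ} {n : ℕ}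
    (hmeas : ∀ k < n, Measurable[ℱ (k + 1)] (g k)) (hint : ∀ k < n, Integrable (g k) P)
    (hcond : ∀ k < n, P[g k | ℱ k] =ᵐ[P] 0)
    (hnonneg : ∀ᵐ ω ∂P, 0 ≤ 1 + ∑ k ∈ range n, g k ω) {c : ℝ} (hc : 0 < c) :
    P {ω | ∃ k ≤ n, c ≤ 1 + ∑ i ∈ range k, g i ω} ≤ ENNReal.ofReal (1 / c) := by
  have hmart := martingale_one_add_sum_range_min hmeas hint hcond
  have hmax := measure_exists_le_of_martingale hmart (n := n)
    (hnonneg.mono fun ω hω => by simpa only [min_self, Pi.zero_apply] using hω) hc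
  refine le_trans (measure_mono ?_) (hmax.trans_eq (by simp))
  rintro ω ⟨k, hk, hck⟩
  exact ⟨k, hk, by simpa only [min_eq_left hk] using hck⟩

end Martingales

section SelfNormalized

variable {Ω : Type*} {mΩ : MeasurableSpace Ω} {P : Measure Ω} {ℱ : Filtration ℕ mΩ}
  {d : ℕ} {lam : ℝ} {a : ℕ → Ω → Fin d → ℝ} {e : ℕ → Ω → ℝ}

lemma integrable_mixtureGain_mul [IsFiniteMeasure P] (hlam : 0 < lam) {n : ℕ}
    (ha : ∀ k < n, Measurable (a (k + 1))) (he : ∀ k < n, Measurable (e (k + 1)))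
    (hbound : ∀ᵐ ω ∂P, ∀ k < n, |e (k + 1) ω| ≤ 1) {k : ℕ} (hk : k < n) :
    Integrable (fun ω =>
      mixtureGain lam (fun s => a s ω) (fun s => e s ω) (k + 1) * e (k + 1) ω) P := by
  have hgain := measurable_mixtureGain lam (fun i hi => ha i (hi.trans_lt hk))
    fun i hi => he i (hi.trans hk)
  refine Integrable.of_bound (hgain.mul (he k hk)).aestronglyMeasurable
    (Real.exp (1 / 2) ^ (k + 1)) ?_
  filter_upwards [hbound] with ω hω
  rw [Real.norm_eq_abs, abs_mul]
  exact (mul_le_of_le_one_right (abs_nonneg _) (hω k hk)).trans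
    (abs_mixtureGain_le hlam _ fun i hi => hω i (hi.trans hk))

lemma measurable_mixtureGain_filtration (lam : ℝ) {n : ℕ}
    (ha : ∀ k < n, Measurable[ℱ k] (a (k + 1)))
    (he : ∀ k < n, Measurable[ℱ (k + 1)] (e (k + 1))) {k : ℕ} (hk : k < n) :
    Measurable[ℱ k] fun ω => mixtureGain lam (fun s => a s ω) (fun s => e s ω) (k + 1) :=
  measurable_mixtureGain lam
    (fun i hi => (ha i (hi.trans_lt hk)).mono (ℱ.mono hi) le_rfl)
    fun i hi => (he i (hi.trans hk)).mono (ℱ.mono hi) le_rfl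

lemma condExp_mixtureGain_mul [IsFiniteMeasure P] (hlam : 0 < lam) {n : ℕ}
    (ha : ∀ k < n, Measurable[ℱ k] (a (k + 1)))
    (he : ∀ k < n, Measurable[ℱ (k + 1)] (e (k + 1)))
    (hbound : ∀ᵐ ω ∂P, ∀ k < n, |e (k + 1) ω| ≤ 1) {k : ℕ} (hk : k < n)
    (hcond : P[e (k + 1) | ℱ k] =ᵐ[P] 0) :
    P[fun ω => mixtureGain lam (fun s => a s ω) (fun s => e s ω) (k + 1) * e (k + 1) ω | ℱ k]
      =ᵐ[P] 0 := by
  have hmeas : ∀ k < n, Measurable (e (k + 1)) := fun k hk => (he k hk).mono (ℱ.le _) le_rfl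
  have hint : Integrable (e (k + 1)) P :=
    Integrable.of_bound (hmeas k hk).aestronglyMeasurable 1 (hbound.mono fun ω hω => hω k hk)
  have hprod := integrable_mixtureGain_mul hlam
    (fun k hk => (ha k hk).mono (ℱ.le _) le_rfl) hmeas hbound hk
  filter_upwards [hcond, condExp_mul_of_stronglyMeasurable_left
    (measurable_mixtureGain_filtration lam ha he hk).stronglyMeasurable hprod hint]
    with ω hzero hpull
  exact hpull.trans (by rw [Pi.mul_apply, hzero, Pi.zero_apply, mul_zero])

theorem measure_exists_le_gaussianMixture_le [IsProbabilityMeasure P] (hlam : 0 < lam) {n : ℕ}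
    (ha : ∀ k < n, Measurable[ℱ k] (a (k + 1)))
    (he : ∀ k < n, Measurable[ℱ (k + 1)] (e (k + 1)))
    (hbound : ∀ᵐ ω ∂P, ∀ k < n, |e (k + 1) ω| ≤ 1)
    (hcond : ∀ k < n, P[e (k + 1) | ℱ k] =ᵐ[P] 0) {c : ℝ} (hc : 0 < c) :
    P {ω | ∃ k ≤ n, c ≤ gaussianMixture lam (fun s => a s ω) (fun s => e s ω) (k + 1)} ≤
      ENNReal.ofReal (1 / c) := by
  set g : ℕ → Ω → ℝ := fun k ω =>
    mixtureGain lam (fun s => a s ω) (fun s => e s ω) (k + 1) * e (k + 1) ω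
  have hdom : ∀ᵐ ω ∂P, ∀ k ≤ n,
      gaussianMixture lam (fun s => a s ω) (fun s => e s ω) (k + 1) ≤
        1 + ∑ i ∈ range k, g i ω :=
    hbound.mono fun ω hω k hk =>
      gaussianMixture_le_one_add_sum hlam _ fun i hi => hω i (hi.trans_le hk)
  have hmeas : ∀ k < n, Measurable[ℱ (k + 1)] (g k) := fun k hk =>
    ((measurable_mixtureGain_filtration lam ha he hk).mono (ℱ.mono k.le_succ) le_rfl).mul
      (he k hk)
  have hint : ∀ k < n, Integrable (g k) P := fun k hk =>
    integrable_mixtureGain_mul hlam (fun i hi => (ha i hi).mono (ℱ.le _) le_rfl)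
      (fun i hi => (he i hi).mono (ℱ.le _) le_rfl) hbound hk
  have hzero : ∀ k < n, P[g k | ℱ k] =ᵐ[P] 0 := fun k hk =>
    condExp_mixtureGain_mul hlam ha he hbound hk (hcond k hk)
  have hnonneg : ∀ᵐ ω ∂P, 0 ≤ 1 + ∑ k ∈ range n, g k ω :=
    hdom.mono fun ω hω => (gaussianMixture_pos ..).le.trans (hω n le_rfl)
  refine le_trans (measure_mono_ae ?_) (measure_exists_le_one_add_sum hmeas hint hzero hnonneg hc)
  filter_upwards [hdom] with ω hω
  rintro ⟨k, hk, hck⟩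
  exact ⟨k, hk, hck.trans (hω k hk)⟩

end SelfNormalized

section History

variable {Ω : Type*} {d : ℕ} {A : ℕ → Ω → Fin d → ℝ} {X : ℕ → Ω → ℝ} {D : ℕ → Ω → ℕ}

lemma comap_round_le_hist {s t : ℕ} (hs : s ∈ Ico 1 t) :
    MeasurableSpace.comap (A s) inferInstance ⊔ MeasurableSpace.comap (X s) inferInstance ⊔
      MeasurableSpace.comap (D s) inferInstance ≤ hist A X D t :=
  le_sup_of_le_left <| le_iSup₂ (f := fun s (_ : s ∈ Ico 1 t) =>
    MeasurableSpace.comap (A s) inferInstance ⊔ MeasurableSpace.comap (X s) inferInstance ⊔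
      MeasurableSpace.comap (D s) inferInstance) s hs

lemma measurable_action_hist (t : ℕ) : Measurable[hist A X D t] (A t) :=
  (comap_measurable (A t)).mono le_sup_right le_rfl

lemma hist_le_hist_succ {t : ℕ} (ht : 1 ≤ t) : hist A X D t ≤ hist A X D (t + 1) := by
  refine sup_le (iSup₂_le fun s hs => comap_round_le_hist ?_) ?_
  · exact Ico_subset_Ico_right t.le_succ hs
  · exact (le_sup_left.trans le_sup_left).trans
      (comap_round_le_hist (mem_Ico.2 ⟨ht, t.lt_succ_self⟩))

lemma measurable_reward_hist_succ {t : ℕ} (ht : 1 ≤ t) :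
    Measurable[hist A X D (t + 1)] (X t) :=
  (comap_measurable (X t)).mono ((le_sup_right.trans le_sup_left).trans
    (comap_round_le_hist (mem_Ico.2 ⟨ht, t.lt_succ_self⟩))) le_rfl

lemma measurable_delay_hist_succ {t : ℕ} (ht : 1 ≤ t) :
    Measurable[hist A X D (t + 1)] (D t) :=
  (comap_measurable (D t)).mono (le_sup_right.trans
    (comap_round_le_hist (mem_Ico.2 ⟨ht, t.lt_succ_self⟩))) le_rfl

variable {mΩ : MeasurableSpace Ω}

lemma hist_le (hA : ∀ t, Measurable (A t)) (hX : ∀ t, Measurable (X t))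
    (hD : ∀ t, Measurable (D t)) (t : ℕ) : hist A X D t ≤ mΩ :=
  sup_le (iSup₂_le fun s _ => sup_le (sup_le (hA s).comap_le (hX s).comap_le) (hD s).comap_le)
    (hA t).comap_le

/-- The filtration of histories available when the reward is drawn. Rounds start at `1` and
filtrations at `0`, so its index `k` is the history of round `k + 1`. -/
def histFiltration (hA : ∀ t, Measurable (A t)) (hX : ∀ t, Measurable (X t))
    (hD : ∀ t, Measurable (D t)) : Filtration ℕ mΩ where
  seq k := hist A X D (k + 1)
  mono' := monotone_nat_of_le_succ fun k => hist_le_hist_succ k.succ_pos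
  le' k := hist_le hA hX hD (k + 1)

end History

section Delays

variable {Ω : Type*} {F mΩ : MeasurableSpace Ω} {P : Measure Ω}

lemma measurable_ite_le {D : Ω → ℕ} (hD : Measurable D) (m : ℕ) :
    Measurable fun ω => if D ω ≤ m then (1 : ℝ) else 0 :=
  (measurable_of_countable fun n : ℕ => if n ≤ m then (1 : ℝ) else 0).comp hD

lemma integral_ite_le {D : Ω → ℕ} (hD : Measurable D) (m : ℕ) :
    ∫ ω, (if D ω ≤ m then (1 : ℝ) else 0) ∂P = (P.map D {n | n ≤ m}).toReal := by
  have hindicator : (fun ω => if D ω ≤ m then (1 : ℝ) else 0) =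
      (D ⁻¹' {n | n ≤ m}).indicator 1 := by
    ext ω
    simp [Set.indicator]
  rw [Measure.map_apply hD MeasurableSet.of_discrete, hindicator,
    integral_indicator_one (hD MeasurableSet.of_discrete), measureReal_def]

lemma condExp_mul_ite_le [IsFiniteMeasure P] (hF : F ≤ mΩ) {X : Ω → ℝ} {D : Ω → ℕ}
    (hX : Measurable X) (hXint : Integrable X P) (hD : Measurable D)
    (hindep : Indep (MeasurableSpace.comap D inferInstance)
      (F ⊔ MeasurableSpace.comap X inferInstance) P) (m : ℕ) :
    P[fun ω => X ω * (if D ω ≤ m then 1 else 0) | F] =ᵐ[P]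
      fun ω => (P.map D {n | n ≤ m}).toReal * P[X | F] ω := by
  have hmeas := measurable_ite_le hD m
  have hint : Integrable (fun ω => if D ω ≤ m then (1 : ℝ) else 0) P :=
    Integrable.of_bound hmeas.aestronglyMeasurable 1 (ae_of_all P fun ω => by split_ifs <;> simp)
  have hprod := condExp_mul_of_indep (le_sup_left : F ≤ F ⊔ MeasurableSpace.comap X inferInstance)
    (sup_le hF hX.comap_le) ((comap_measurable X).mono le_sup_right le_rfl) hXint hmeas hint
    (indep_of_indep_of_le_left hindep (measurable_ite_le (comap_measurable D) m).comap_le)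
  filter_upwards [hprod] with ω hω
  rw [← integral_ite_le hD m, mul_comm]
  exact hω

end Delays

section WindowNoise

variable {Ω : Type*} {d : ℕ} {A : ℕ → Ω → Fin d → ℝ} {X : ℕ → Ω → ℝ} {D : ℕ → Ω → ℕ}

/-- The noise in the reward of round `s` when it is counted only if its delay is at most `m`;
here `τ` stands for the probability of that event. -/
def windowNoise (A : ℕ → Ω → Fin d → ℝ) (X : ℕ → Ω → ℝ) (D : ℕ → Ω → ℕ) (θ : Fin d → ℝ)
    (m : ℕ) (τ : ℝ) (s : ℕ) (ω : Ω) : ℝ :=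
  X s ω * (if D s ω ≤ m then 1 else 0) - τ * (A s ω ⬝ᵥ θ)

lemma abs_windowNoise_le_one {θ : Fin d → ℝ} (m : ℕ) {τ : ℝ} (hτ : τ ∈ Set.Icc 0 1) {s : ℕ}
    {ω : Ω} (hX : X s ω ∈ Set.Icc 0 1) (hAθ : A s ω ⬝ᵥ θ ∈ Set.Icc 0 1) :
    |windowNoise A X D θ m τ s ω| ≤ 1 := by
  have hreward : X s ω * (if D s ω ≤ m then 1 else 0) ∈ Set.Icc 0 1 := by
    split_ifs
    · simpa only [mul_one] using hX
    · simp
  have hmean : τ * (A s ω ⬝ᵥ θ) ∈ Set.Icc 0 1 := unitInterval.mul_mem hτ hAθ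
  exact abs_sub_le_of_nonneg_of_le hreward.1 hreward.2 hmean.1 hmean.2

variable {mΩ : MeasurableSpace Ω}

lemma measurable_windowNoise (θ : Fin d → ℝ) (m : ℕ) (τ : ℝ) {s : ℕ} (hA : Measurable (A s))
    (hX : Measurable (X s)) (hD : Measurable (D s)) :
    Measurable (windowNoise A X D θ m τ s) :=
  (hX.mul (measurable_ite_le hD m)).sub
    ((measurable_dotProduct hA measurable_const).const_mul τ)

variable {P : Measure Ω}

lemma condExp_windowNoise [IsFiniteMeasure P] (hA : ∀ t, Measurable (A t))
    (hX : ∀ t, Measurable (X t)) (hD : ∀ t, Measurable (D t)) {θ : Fin d → ℝ} (m : ℕ) {t : ℕ}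
    (hXint : Integrable (X t) P)
    (hcond : P[X t | hist A X D t] =ᵐ[P] fun ω => A t ω ⬝ᵥ θ)
    (hindep : Indep (MeasurableSpace.comap (D t) inferInstance)
      (hist A X D t ⊔ MeasurableSpace.comap (X t) inferInstance) P) :
    P[windowNoise A X D θ m (P.map (D t) {n | n ≤ m}).toReal t | hist A X D t] =ᵐ[P] 0 := by
  set τ := (P.map (D t) {n | n ≤ m}).toReal
  have hH := hist_le hA hX hD t
  have hmean : Integrable (fun ω => τ * (A t ω ⬝ᵥ θ)) P :=
    (integrable_condExp.congr hcond).const_mul τ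
  have hreward : Integrable (fun ω => X t ω * (if D t ω ≤ m then 1 else 0)) P :=
    hXint.mul_bdd (measurable_ite_le (hD t) m).aestronglyMeasurable
      (ae_of_all P fun ω => by split_ifs <;> simp) (c := 1)
  have hmean_meas : Measurable[hist A X D t] fun ω => τ * (A t ω ⬝ᵥ θ) :=
    (measurable_dotProduct (measurable_action_hist t) measurable_const).const_mul τ
  filter_upwards [condExp_sub hreward hmean (hist A X D t),
    condExp_mul_ite_le hH (hX t) hXint (hD t) hindep m, hcond] with ω hsub hmul hω
  refine hsub.trans ?_
  rw [Pi.sub_apply, hmul, hω, condExp_of_stronglyMeasurable hH hmean_meas.stronglyMeasurable hmean,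
    sub_self, Pi.zero_apply]

lemma ae_abs_windowNoise_le_one [IsFiniteMeasure P] (hA : ∀ t, Measurable (A t))
    (hX : ∀ t, Measurable (X t)) (hD : ∀ t, Measurable (D t)) {θ : Fin d → ℝ} (m : ℕ) {τ : ℝ}
    (hτ : τ ∈ Set.Icc 0 1) {t : ℕ} (hXint : Integrable (X t) P)
    (hXmem : ∀ᵐ ω ∂P, X t ω ∈ Set.Icc 0 1)
    (hcond : P[X t | hist A X D t] =ᵐ[P] fun ω => A t ω ⬝ᵥ θ) :
    ∀ᵐ ω ∂P, |windowNoise A X D θ m τ t ω| ≤ 1 := by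
  filter_upwards [hXmem, hcond, condExp_mem_Icc (hist_le hA hX hD t) hXint hXmem]
    with ω hXω hmean hmem
  exact abs_windowNoise_le_one m hτ hXω (hmean ▸ hmem)

theorem measure_exists_le_gaussianMixture_windowNoise_le [IsProbabilityMeasure P] {lam : ℝ}
    (hlam : 0 < lam) (m T : ℕ) {θ : Fin d → ℝ} (𝓓 : Measure ℕ) [IsProbabilityMeasure 𝓓]
    (hA : ∀ t, Measurable (A t)) (hX : ∀ t, Measurable (X t)) (hD : ∀ t, Measurable (D t))
    (hXmem : ∀ t ∈ Icc 1 T, ∀ᵐ ω ∂P, X t ω ∈ Set.Icc 0 1)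
    (hcond : ∀ t ∈ Icc 1 T, P[X t | hist A X D t] =ᵐ[P] fun ω => A t ω ⬝ᵥ θ)
    (hlaw : ∀ t ∈ Icc 1 T, P.map (D t) = 𝓓)
    (hindep : ∀ t ∈ Icc 1 T, Indep (MeasurableSpace.comap (D t) inferInstance)
      (hist A X D t ⊔ MeasurableSpace.comap (X t) inferInstance) P) {c : ℝ} (hc : 0 < c) :
    P {ω | ∃ k ≤ T, c ≤ gaussianMixture lam (fun s => A s ω)
      (fun s => windowNoise A X D θ m (𝓓 {n | n ≤ m}).toReal s ω) (k + 1)} ≤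
        ENNReal.ofReal (1 / c) := by
  have hround : ∀ k < T, k + 1 ∈ Icc 1 T := fun k hk => mem_Icc.2 ⟨k.succ_pos, hk⟩
  have hτ : (𝓓 {n | n ≤ m}).toReal ∈ Set.Icc 0 1 := ⟨measureReal_nonneg, measureReal_le_one⟩
  have hXint : ∀ k < T, Integrable (X (k + 1)) P := fun k hk =>
    Integrable.of_mem_Icc 0 1 (hX _).aemeasurable (hXmem _ (hround k hk))
  refine measure_exists_le_gaussianMixture_le (ℱ := histFiltration hA hX hD) hlam
    (fun k _ => measurable_action_hist (k + 1)) (fun k _ => ?_) ?_ (fun k hk => ?_) hc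
  · exact measurable_windowNoise θ m _
      ((measurable_action_hist (k + 1)).mono (hist_le_hist_succ k.succ_pos) le_rfl)
      (measurable_reward_hist_succ k.succ_pos) (measurable_delay_hist_succ k.succ_pos)
  · simp only [ae_all_iff]
    exact fun k hk => ae_abs_windowNoise_le_one hA hX hD m hτ (hXint k hk)
      (hXmem _ (hround k hk)) (hcond _ (hround k hk))
  · rw [← hlaw _ (hround k hk)]
    exact condExp_windowNoise hA hX hD m (hXint k hk) (hcond _ (hround k hk))
      (hindep _ (hround k hk))

end WindowNoise

section Estimator

variable {Ω : Type*} {d : ℕ} {A : ℕ → Ω → Fin d → ℝ} {X : ℕ → Ω → ℝ} {D : ℕ → Ω → ℕ}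

/-- The reward of round `s` if it is counted in the long run (its delay is at most `m`) but has
not arrived before round `t`. -/
def pendingReward (X : ℕ → Ω → ℝ) (D : ℕ → Ω → ℕ) (m t s : ℕ) (ω : Ω) : ℝ :=
  X s ω * if t - s < D s ω ∧ D s ω ≤ m then 1 else 0

lemma mul_ite_le_min_eq (X : ℕ → Ω → ℝ) (D : ℕ → Ω → ℕ) (m t s : ℕ) (ω : Ω) :
    X s ω * (if D s ω ≤ min m (t - s) then 1 else 0) =
      X s ω * (if D s ω ≤ m then 1 else 0) - pendingReward X D m t s ω := by
  rw [pendingReward]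
  grind

lemma sum_pendingReward_smul (A : ℕ → Ω → Fin d → ℝ) (X : ℕ → Ω → ℝ) (D : ℕ → Ω → ℕ)
    (m t : ℕ) (ω : Ω) :
    ∑ s ∈ Ico 1 t, pendingReward X D m t s ω • A s ω =
      ∑ s ∈ Ico (max 1 (t - m)) t, pendingReward X D m t s ω • A s ω := by
  refine (sum_subset (Ico_subset_Ico_left (le_max_left _ _)) fun s hs hs' => ?_).symm
  have hexpired : ¬(t - s < D s ω ∧ D s ω ≤ m) := by
    simp only [mem_Ico] at hs hs'
    lia
  rw [pendingReward, if_neg hexpired, mul_zero, zero_smul]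

lemma thetaHatW_sub_smul (A : ℕ → Ω → Fin d → ℝ) (X : ℕ → Ω → ℝ) (D : ℕ → Ω → ℕ)
    {lam : ℝ} (hlam : 0 < lam) (m t : ℕ) (θ : Fin d → ℝ) (τ : ℝ) (ω : Ω) :
    thetaHatW A X D lam m t ω - τ • θ = (Vmat (fun s => A s ω) lam t)⁻¹ *ᵥ
      (noiseSum (fun s => A s ω) (fun s => windowNoise A X D θ m τ s ω) t - (lam * τ) • θ -
        ∑ s ∈ Ico (max 1 (t - m)) t, pendingReward X D m t s ω • A s ω) := by
  have hV := isUnit_det_of_posDef (Vmat_posDef (fun s => A s ω) hlam t)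
  have hθ : τ • θ = (Vmat (fun s => A s ω) lam t)⁻¹ *ᵥ
      ((lam * τ) • θ + ∑ s ∈ Ico 1 t, (τ * (A s ω ⬝ᵥ θ)) • A s ω) := by
    rw [eq_comm]
    apply inv_mulVec_eq_of_mulVec_eq hV
    simp only [Vmat_mulVec, dotProduct_smul, smul_eq_mul, mul_smul]
  rw [thetaHatW, hθ, ← mulVec_sub, ← sum_pendingReward_smul, noiseSum]
  congr 1
  simp only [mul_ite_le_min_eq, windowNoise, sub_smul, sum_sub_distrib]
  abel

lemma mnorm_thetaHatW_sub_smul_le {lam : ℝ} (hlam : 0 < lam) {m t : ℕ} {θ : Fin d → ℝ}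
    (hθ : θ ⬝ᵥ θ ≤ 1) {τ : ℝ} (hτ : τ ∈ Set.Icc 0 1) {ω : Ω}
    (hX : ∀ s ∈ Ico 1 t, X s ω ∈ Set.Icc 0 1) :
    mnorm (Vmat (fun s => A s ω) lam t) (thetaHatW A X D lam m t ω - τ • θ) ≤
      mnorm (Vmat (fun s => A s ω) lam t)⁻¹
          (noiseSum (fun s => A s ω) (fun s => windowNoise A X D θ m τ s ω) t) + √lam +
        ∑ s ∈ Ico (max 1 (t - m)) t, mnorm (Vmat (fun s => A s ω) lam t)⁻¹ (A s ω) := by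
  have hV := Vmat_posDef (fun s => A s ω) hlam t
  have hVinv := hV.inv.posSemidef
  rw [thetaHatW_sub_smul A X D hlam m t θ τ ω, mnorm_inv_mulVec (isUnit_det_of_posDef hV)]
  set V := Vmat (fun s => A s ω) lam t
  have hbias : mnorm V⁻¹ ((lam * τ) • θ) ≤ √lam :=
    calc mnorm V⁻¹ ((lam * τ) • θ) = τ * (lam * mnorm V⁻¹ θ) := by
          rw [mnorm_smul, abs_of_nonneg (mul_nonneg hlam.le hτ.1)]; ring
      _ ≤ lam * mnorm V⁻¹ θ :=
          mul_le_of_le_one_left (mul_nonneg hlam.le (mnorm_nonneg _ _)) hτ.2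
      _ ≤ √lam := lam_mul_mnorm_inv_Vmat_le_sqrt hlam _ t hθ
  have hpending : mnorm V⁻¹ (∑ s ∈ Ico (max 1 (t - m)) t, pendingReward X D m t s ω • A s ω) ≤
      ∑ s ∈ Ico (max 1 (t - m)) t, mnorm V⁻¹ (A s ω) := by
    refine (mnorm_sum_le hVinv _ _).trans (sum_le_sum fun s hs => ?_)
    obtain ⟨hX₀, hX₁⟩ := hX s (Ico_subset_Ico_left (le_max_left _ _) hs)
    have habs : |pendingReward X D m t s ω| ≤ 1 := by
      rw [pendingReward]
      split_ifs <;> simp [abs_of_nonneg, hX₀, hX₁]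
    rw [mnorm_smul]
    exact mul_le_of_le_one_left (mnorm_nonneg _ _) habs
  refine (mnorm_sub_le hVinv _ _).trans (add_le_add ((mnorm_sub_le hVinv _ _).trans ?_) hpending)
  gcongr

lemma mnorm_thetaHatW_sub_smul_le_fconf (hd : 1 ≤ d) {lam : ℝ} (hlam : 0 < lam) {m t : ℕ}
    {δ : ℝ} (hδ : 0 < δ) {θ : Fin d → ℝ} (hθ : θ ⬝ᵥ θ ≤ 1) {τ : ℝ} (hτ : τ ∈ Set.Icc 0 1)
    {ω : Ω} (hA : ∀ s ∈ Ico 1 t, A s ω ⬝ᵥ A s ω ≤ 1)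
    (hX : ∀ s ∈ Ico 1 t, X s ω ∈ Set.Icc 0 1)
    (hmix : gaussianMixture lam (fun s => A s ω) (fun s => windowNoise A X D θ m τ s ω) t ≤
      1 / δ) :
    mnorm (Vmat (fun s => A s ω) lam t) (thetaHatW A X D lam m t ω - τ • θ) ≤
      fconf d lam δ t +
        ∑ s ∈ Ico (max 1 (t - m)) t, mnorm (Vmat (fun s => A s ω) lam t)⁻¹ (A s ω) := by
  have hnoise := (mnorm_noiseSum_le_sqrt _ _ (one_div_pos.2 hδ) hmix).trans
    (Real.sqrt_le_sqrt (add_le_add_right (log_det_Vmat_div_le hd hlam hA) _))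
  have hdecomp := mnorm_thetaHatW_sub_smul_le hlam hθ hτ hX (A := A) (D := D) (m := m)
  rw [fconf]
  linarith

end Estimator

theorem concentration_windowed_least_squares_general
    {Ω : Type*} [MeasurableSpace Ω] (P : Measure Ω) [IsProbabilityMeasure P]
    {d : ℕ} (hd : 1 ≤ d) {lam : ℝ} (hlam : 0 < lam) (m T : ℕ) {δ : ℝ} (hδ : 0 < δ)
    {θ : Fin d → ℝ} (hθ : √(θ ⬝ᵥ θ) ≤ 1) (𝓓 : Measure ℕ) [IsProbabilityMeasure 𝓓]
    (A : ℕ → Ω → Fin d → ℝ) (X : ℕ → Ω → ℝ) (D : ℕ → Ω → ℕ)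
    (hAmeas : ∀ t, Measurable (A t)) (hXmeas : ∀ t, Measurable (X t))
    (hDmeas : ∀ t, Measurable (D t))
    (hAnorm : ∀ t ∈ Icc 1 T, ∀ᵐ ω ∂P, √(A t ω ⬝ᵥ A t ω) ≤ 1)
    (hX : ∀ t ∈ Icc 1 T, ∀ᵐ ω ∂P, X t ω ∈ Set.Icc 0 1)
    (hXcond : ∀ t ∈ Icc 1 T, P[X t | hist A X D t] =ᵐ[P] fun ω => A t ω ⬝ᵥ θ)
    (hDlaw : ∀ t ∈ Icc 1 T, P.map (D t) = 𝓓)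
    (hDindep : ∀ t ∈ Icc 1 T,
      Indep (MeasurableSpace.comap (D t) inferInstance)
        (hist A X D t ⊔ MeasurableSpace.comap (X t) inferInstance) P) :
    ENNReal.ofReal (1 - δ) ≤ P {ω | ∀ t ∈ Icc 1 T,
      mnorm (Vmat (fun s => A s ω) lam t)
          (thetaHatW A X D lam m t ω - (𝓓 {n | n ≤ m}).toReal • θ) ≤
        fconf d lam δ t +
          ∑ s ∈ Ico (max 1 (t - m)) t, mnorm (Vmat (fun s => A s ω) lam t)⁻¹ (A s ω)} := by
  have hτ : (𝓓 {n | n ≤ m}).toReal ∈ Set.Icc 0 1 := ⟨measureReal_nonneg, measureReal_le_one⟩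
  have hmix := measure_exists_le_gaussianMixture_windowNoise_le hlam m T 𝓓 hAmeas hXmeas hDmeas
    hX hXcond hDlaw hDindep (one_div_pos.2 hδ)
  rw [one_div_one_div] at hmix
  refine ofReal_one_sub_le_measure hδ.le (le_trans (measure_mono_ae ?_) hmix)
  have hbounds : ∀ᵐ ω ∂P, ∀ t ∈ Icc 1 T, A t ω ⬝ᵥ A t ω ≤ 1 ∧ X t ω ∈ Set.Icc 0 1 :=
    (ae_ball_iff (Icc 1 T).countable_toSet).2 fun t ht => by
      filter_upwards [hAnorm t ht, hX t ht] with ω hAω hXω using ⟨Real.sqrt_le_one.1 hAω, hXω⟩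
  filter_upwards [hbounds] with ω hω
  refine not_imp_comm.1 fun hgood t ht => ?_
  have hpast : Ico 1 t ⊆ Icc 1 T := fun s hs => by grind
  obtain ⟨k, rfl⟩ := Nat.exists_eq_add_of_le' (mem_Icc.1 ht).1
  refine mnorm_thetaHatW_sub_smul_le_fconf hd hlam hδ (Real.sqrt_le_one.1 hθ) hτ
    (fun s hs => (hω s (hpast hs)).1) (fun s hs => (hω s (hpast hs)).2) ?_
  by_contra! hlt
  exact hgood ⟨k, by grind, hlt.le⟩

theorem concentration_windowed_least_squares
    {Ω : Type*} [MeasurableSpace Ω] (P : Measure Ω) [IsProbabilityMeasure P]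
    {d : ℕ} (hd : 1 ≤ d) (lam : ℝ) (hlam : 0 < lam)
    (m T : ℕ) (hm : 1 ≤ m) (hT : 1 ≤ T)
    (δ : ℝ) (hδ : δ ∈ Set.Ioo (0 : ℝ) 1)
    (θ : Fin d → ℝ) (hθ : Real.sqrt (θ ⬝ᵥ θ) ≤ 1)
    (𝓓 : Measure ℕ) [IsProbabilityMeasure 𝓓]
    (A : ℕ → Ω → Fin d → ℝ) (X : ℕ → Ω → ℝ) (D : ℕ → Ω → ℕ)
    (hAmeas : ∀ t, Measurable (A t)) (hXmeas : ∀ t, Measurable (X t))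
    (hDmeas : ∀ t, Measurable (D t))
    -- actions have norm at most one and mean rewards in [0,1], almost surely
    (hAnorm : ∀ t ∈ Finset.Icc 1 T, ∀ᵐ ω ∂P, Real.sqrt (A t ω ⬝ᵥ A t ω) ≤ 1)
    (hAθ : ∀ t ∈ Finset.Icc 1 T, ∀ᵐ ω ∂P, A t ω ⬝ᵥ θ ∈ Set.Icc (0 : ℝ) 1)
    -- rewards are {0,1}-valued and, conditionally on the past and `A_t`,
    -- Bernoulli with mean `⟨A_t, θ⟩`
    (hX01 : ∀ t ∈ Finset.Icc 1 T, ∀ᵐ ω ∂P, X t ω = 0 ∨ X t ω = 1)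
    (hXcond : ∀ t ∈ Finset.Icc 1 T,
      P[X t | hist A X D t] =ᵐ[P] fun ω => A t ω ⬝ᵥ θ)
    -- delays have law `𝓓` and are independent of the past, `A_t` and `X_t`
    (hDlaw : ∀ t ∈ Finset.Icc 1 T, Measure.map (D t) P = 𝓓)
    (hDindep : ∀ t ∈ Finset.Icc 1 T,
      Indep (MeasurableSpace.comap (D t) inferInstance)
        (hist A X D t ⊔ MeasurableSpace.comap (X t) inferInstance) P) :
    P {ω | ∀ t ∈ Finset.Icc 1 T,
        mnorm (Vmat (fun s => A s ω) lam t)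
            (thetaHatW A X D lam m t ω - (𝓓 {n | n ≤ m}).toReal • θ) ≤
          2 * fconf d lam δ t +
            ∑ s ∈ Finset.Ico (max 1 (t - m)) t,
              mnorm (Vmat (fun s => A s ω) lam t)⁻¹ (A s ω)} ≥
      ENNReal.ofReal (1 - 2 * δ) := by
  have hX : ∀ t ∈ Icc 1 T, ∀ᵐ ω ∂P, X t ω ∈ Set.Icc 0 1 := fun t ht =>
    (hX01 t ht).mono fun ω hω => by rcases hω with h | h <;> simp [h]
  refine (ENNReal.ofReal_le_ofReal (by linarith [hδ.1])).trans <|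
    (concentration_windowed_least_squares_general P hd hlam m T hδ.1 hθ 𝓓 A X D hAmeas hXmeas
      hDmeas hAnorm hX hXcond hDlaw hDindep).trans (measure_mono fun ω hω t ht => ?_)
  have hconf : 0 ≤ fconf d lam δ t := add_nonneg (Real.sqrt_nonneg _) (Real.sqrt_nonneg _)
  linarith [hω t ht]
end

section
/- Let V be a symmetric positive definite d×d real matrix, τ > 0, α ≥ 0, and θ, θ̂ ∈ ℝ^d with ‖θ̂ − τ·θ‖_V ≤ α. Let 𝒜 ⊂ ℝ^d be a finite nonempty set and let A ∈ 𝒜 satisfy ⟨A, θ̂⟩ + α‖A‖_{V^{-1}} ≥ ⟨a, θ̂⟩ + α‖a‖_{V^{-1}} for all a ∈ 𝒜. Then for every a ∈ 𝒜, ⟨a, θ⟩ − ⟨A, θ⟩ ≤ (2α/τ)·‖A‖_{V^{-1}}. -/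
/-!
By Cauchy–Schwarz for the dual pair of norms `‖·‖_{V⁻¹}`, `‖·‖_V`, the estimation error
`δ = θ̂ - τ • θ` satisfies `|⟨x, δ⟩| ≤ α ‖x‖_{V⁻¹}` for every `x`. Substituting `τ • θ = θ̂ - δ`
into `τ (⟨a, θ⟩ - ⟨A, θ⟩)`, the error along `a` costs at most `α ‖a‖_{V⁻¹}`, which the optimism
of `A` trades for `α ‖A‖_{V⁻¹}`; the error along `A` costs another `α ‖A‖_{V⁻¹}`.
-/

open Matrix

section CauchySchwarz

variable {n R : Type*} [Fintype n]
  [CommRing R] [LinearOrder R] [IsStrictOrderedRing R] [StarRing R] [TrivialStar R]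
  {V : Matrix n n R}

theorem sq_dotProduct_mulVec_le (hV : V.PosSemidef) (x y : n → R) :
    (x ⬝ᵥ V *ᵥ y) ^ 2 ≤ (x ⬝ᵥ V *ᵥ x) * (y ⬝ᵥ V *ᵥ y) := by
  classical
  have hsymm : y ⬝ᵥ V *ᵥ x = x ⬝ᵥ V *ᵥ y := by
    rw [← dotProduct_transpose_mulVec, ← conjTranspose_eq_transpose_of_trivial,
      hV.isHermitian.eq]
  have hcs := (toBilin' V).apply_mul_apply_le_of_forall_zero_le
    (fun z ↦ by simpa [toBilin'_apply'] using hV.dotProduct_mulVec_nonneg z) x y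
  simpa only [toBilin'_apply', hsymm, ← sq] using hcs

theorem sq_dotProduct_le_inv_mul [DecidableEq n] (hV : V.PosSemidef) (hunit : IsUnit V)
    (x u : n → R) :
    (x ⬝ᵥ u) ^ 2 ≤ (x ⬝ᵥ V⁻¹ *ᵥ x) * (u ⬝ᵥ V *ᵥ u) := by
  have hcancel : V *ᵥ (V⁻¹ *ᵥ x) = x := by
    rw [mulVec_mulVec, mul_nonsing_inv V ((isUnit_iff_isUnit_det V).1 hunit), one_mulVec]
  calc
    (x ⬝ᵥ u) ^ 2 = (u ⬝ᵥ V *ᵥ (V⁻¹ *ᵥ x)) ^ 2 := by rw [hcancel, dotProduct_comm]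
    _ ≤ (u ⬝ᵥ V *ᵥ u) * ((V⁻¹ *ᵥ x) ⬝ᵥ V *ᵥ (V⁻¹ *ᵥ x)) := sq_dotProduct_mulVec_le hV _ _
    _ = (x ⬝ᵥ V⁻¹ *ᵥ x) * (u ⬝ᵥ V *ᵥ u) := by
      rw [hcancel, dotProduct_comm (V⁻¹ *ᵥ x), mul_comm]

end CauchySchwarz

section Optimism

variable {d : ℕ} {V : Matrix (Fin d) (Fin d) ℝ}

theorem abs_dotProduct_le_mnorm_inv_mul_mnorm (hV : V.PosDef) (x u : Fin d → ℝ) :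
    |x ⬝ᵥ u| ≤ mnorm V⁻¹ x * mnorm V u := by
  have hx : 0 ≤ x ⬝ᵥ V⁻¹ *ᵥ x := by
    simpa only [star_trivial] using hV.inv.posSemidef.dotProduct_mulVec_nonneg x
  rw [mnorm, mnorm, ← Real.sqrt_mul hx]
  exact Real.abs_le_sqrt (sq_dotProduct_le_inv_mul hV.posSemidef hV.isUnit x u)

theorem abs_dotProduct_le_of_mnorm_le (hV : V.PosDef) {α : ℝ} {u : Fin d → ℝ}
    (hu : mnorm V u ≤ α) (x : Fin d → ℝ) : |x ⬝ᵥ u| ≤ α * mnorm V⁻¹ x :=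
  calc
    |x ⬝ᵥ u| ≤ mnorm V⁻¹ x * mnorm V u := abs_dotProduct_le_mnorm_inv_mul_mnorm hV x u
    _ ≤ mnorm V⁻¹ x * α := mul_le_mul_of_nonneg_left hu (Real.sqrt_nonneg _)
    _ = α * mnorm V⁻¹ x := mul_comm _ _

theorem per_round_optimism_regret_bound_general (hV : V.PosDef) {τ : ℝ} (hτ : 0 < τ) {α : ℝ}
    {θ θhat : Fin d → ℝ} (hconc : mnorm V (θhat - τ • θ) ≤ α) {a A : Fin d → ℝ}
    (hopt : a ⬝ᵥ θhat + α * mnorm V⁻¹ a ≤ A ⬝ᵥ θhat + α * mnorm V⁻¹ A) :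
    a ⬝ᵥ θ - A ⬝ᵥ θ ≤ (2 * α / τ) * mnorm V⁻¹ A := by
  set δ := θhat - τ • θ with hδ
  have herror (x : Fin d → ℝ) : |x ⬝ᵥ δ| ≤ α * mnorm V⁻¹ x :=
    abs_dotProduct_le_of_mnorm_le hV hconc x
  have hreward (x : Fin d → ℝ) : x ⬝ᵥ θ * τ = x ⬝ᵥ θhat - x ⬝ᵥ δ := by
    rw [hδ, dotProduct_sub, dotProduct_smul, smul_eq_mul]
    ring
  rw [div_mul_eq_mul_div, le_div_iff₀ hτ]
  calc
    (a ⬝ᵥ θ - A ⬝ᵥ θ) * τ = (a ⬝ᵥ θhat - a ⬝ᵥ δ) - (A ⬝ᵥ θhat - A ⬝ᵥ δ) := by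
      rw [sub_mul, hreward, hreward]
    _ ≤ (a ⬝ᵥ θhat + α * mnorm V⁻¹ a) - (A ⬝ᵥ θhat - α * mnorm V⁻¹ A) := by
      linarith [neg_le_of_abs_le (herror a), le_of_abs_le (herror A)]
    _ ≤ (A ⬝ᵥ θhat + α * mnorm V⁻¹ A) - (A ⬝ᵥ θhat - α * mnorm V⁻¹ A) :=
      sub_le_sub_right hopt _
    _ = 2 * α * mnorm V⁻¹ A := by ring

end Optimism

theorem per_round_optimism_regret_bound
    {d : ℕ} (V : Matrix (Fin d) (Fin d) ℝ) (hV : V.PosDef)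
    (τ : ℝ) (hτ : 0 < τ) (α : ℝ) (hα : 0 ≤ α)
    (θ θhat : Fin d → ℝ)
    (hconc : mnorm V (θhat - τ • θ) ≤ α)
    (𝒜 : Finset (Fin d → ℝ)) (h𝒜 : 𝒜.Nonempty)
    (A : Fin d → ℝ) (hA : A ∈ 𝒜)
    (hopt : ∀ a ∈ 𝒜, a ⬝ᵥ θhat + α * mnorm V⁻¹ a ≤ A ⬝ᵥ θhat + α * mnorm V⁻¹ A) :
    ∀ a ∈ 𝒜, a ⬝ᵥ θ - A ⬝ᵥ θ ≤ (2 * α / τ) * mnorm V⁻¹ A :=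
  fun a ha ↦ per_round_optimism_regret_bound_general hV hτ hconc (hopt a ha)
end

section
/- For every τ ∈ (0,1] and every Δ ∈ (0, 1/8], the Bernoulli relative entropy satisfies d(τ/2, τ(1/2 + 2Δ)) ≤ 32 τ Δ². -/
/-- Bernoulli relative entropy `d(p,q) = p log(p/q) + (1-p) log((1-p)/(1-q))`.
(In Lean, `Real.log 0 = 0`, so the convention `0 · log 0 = 0` holds automatically.) -/
noncomputable def klBer (p q : ℝ) : ℝ :=
  p * Real.log (p / q) + (1 - p) * Real.log ((1 - p) / (1 - q))

/-!
Relative entropy is at most the χ²-divergence `(p - q)² / (q (1 - q))`, because `log x ≤ x - 1`.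
Censoring, which scales both success probabilities by `τ ≤ 1`, multiplies the χ²-divergence by
`τ (1 - q) / (1 - τ q) ≤ τ`. For `p = 1/2` and `q = 1/2 + 2Δ` the uncensored χ²-divergence is
`16 Δ² / (1 - 16 Δ²)`, which is at most `32 Δ²` as soon as `16 Δ² ≤ 1/2`.
-/

theorem mul_log_div_le {x y : ℝ} (hx : 0 ≤ x) (hy : 0 < y) :
    x * Real.log (x / y) ≤ x * (x / y - 1) := by
  rcases hx.eq_or_lt with rfl | hx
  · simp
  · exact mul_le_mul_of_nonneg_left (Real.log_le_sub_one_of_pos (div_pos hx hy)) hx.le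

theorem klBer_le_sq_sub_div {p q : ℝ} (hp : p ∈ Set.Icc 0 1) (hq : q ∈ Set.Ioo 0 1) :
    klBer p q ≤ (p - q) ^ 2 / (q * (1 - q)) := by
  have hq0 : 0 < q := hq.1
  have hq1 : 0 < 1 - q := sub_pos.2 hq.2
  calc klBer p q ≤ p * (p / q - 1) + (1 - p) * ((1 - p) / (1 - q) - 1) :=
        add_le_add (mul_log_div_le hp.1 hq0) (mul_log_div_le (sub_nonneg.2 hp.2) hq1)
    _ = (p - q) ^ 2 / (q * (1 - q)) := by
        field_simp
        ring

theorem klBer_mul_mul_le {τ p q : ℝ} (hτ : τ ∈ Set.Ioc 0 1) (hp : p ∈ Set.Icc 0 1)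
    (hq : q ∈ Set.Ioo 0 1) :
    klBer (τ * p) (τ * q) ≤ τ * ((p - q) ^ 2 / (q * (1 - q))) := by
  obtain ⟨hτ0, hτ1⟩ := hτ
  obtain ⟨hq0, hq1⟩ := hq
  have hτp : τ * p ∈ Set.Icc 0 1 :=
    ⟨mul_nonneg hτ0.le hp.1, mul_le_one₀ hτ1 hp.1 hp.2⟩
  have hτq_le : τ * q ≤ q := mul_le_of_le_one_left hq0.le hτ1
  have hτq : τ * q ∈ Set.Ioo 0 1 := ⟨mul_pos hτ0 hq0, hτq_le.trans_lt hq1⟩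
  calc klBer (τ * p) (τ * q) ≤ (τ * p - τ * q) ^ 2 / (τ * q * (1 - τ * q)) :=
        klBer_le_sq_sub_div hτp hτq
    _ = τ * ((p - q) ^ 2 / (q * (1 - τ * q))) := by
        have : 0 < 1 - τ * q := sub_pos.2 hτq.2
        field_simp
    _ ≤ τ * ((p - q) ^ 2 / (q * (1 - q))) := by
        have : 0 < 1 - q := sub_pos.2 hq1
        gcongr

theorem klBer_censored_gap_bound_general (τ Δ : ℝ) (hτ : τ ∈ Set.Ioc (0 : ℝ) 1)
    (hΔ : 16 * Δ ^ 2 ≤ 1 / 2) :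
    klBer (τ / 2) (τ * (1 / 2 + 2 * Δ)) ≤ 32 * τ * Δ ^ 2 := by
  obtain ⟨hΔ_neg, hΔ_pos⟩ : -(1 / 4) < Δ ∧ Δ < 1 / 4 :=
    abs_lt_of_sq_lt_sq' (by linarith) (by norm_num)
  have hq : 1 / 2 + 2 * Δ ∈ Set.Ioo (0 : ℝ) 1 := ⟨by linarith, by linarith⟩
  have hvar : 1 / 8 ≤ (1 / 2 + 2 * Δ) * (1 - (1 / 2 + 2 * Δ)) := by linarith
  calc klBer (τ / 2) (τ * (1 / 2 + 2 * Δ))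
      = klBer (τ * (1 / 2)) (τ * (1 / 2 + 2 * Δ)) := by rw [mul_one_div]
    _ ≤ τ * ((1 / 2 - (1 / 2 + 2 * Δ)) ^ 2 /
          ((1 / 2 + 2 * Δ) * (1 - (1 / 2 + 2 * Δ)))) :=
        klBer_mul_mul_le hτ ⟨by norm_num, by norm_num⟩ hq
    _ ≤ τ * ((1 / 2 - (1 / 2 + 2 * Δ)) ^ 2 / (1 / 8)) := by
        have : 0 ≤ τ := hτ.1.le
        gcongr
    _ = 32 * τ * Δ ^ 2 := by ring

theorem klBer_censored_gap_bound (τ Δ : ℝ)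
    (hτ : τ ∈ Set.Ioc (0 : ℝ) 1) (hΔ : Δ ∈ Set.Ioc (0 : ℝ) (1 / 8)) :
    klBer (τ / 2) (τ * (1 / 2 + 2 * Δ)) ≤ 32 * τ * Δ ^ 2 :=
  klBer_censored_gap_bound_general τ Δ hτ (by nlinarith [hΔ.1, hΔ.2])
end

section
/- For all integers T ≥ 1 and K ≥ 2 and every τ ∈ (0,1], there exists Δ ∈ (0, 1/8] such that (TΔ/4) · exp(−32 τ Δ² T/(K−1)) ≥ (1/128) · min( T, √(T(K−1)/τ) ). -/
/-!
The function `x ↦ x * exp (-x ^ 2 / (2 * σ ^ 2))` increases up to `x = σ`, where its value is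
`exp (-1 / 2) * σ`. The left-hand side is, up to the factor `T / 4`, this function of `Δ` with
`σ = √(T * (K - 1) / τ) / (8 * T)`, so we take `Δ` to be the maximizer `σ` truncated at `1 / 8`.
-/

theorem exp_neg_half_le_exp_neg_sq_div {x σ : ℝ} (h : |x| ≤ |σ|) :
    Real.exp (-1 / 2) ≤ Real.exp (-(x ^ 2 / (2 * σ ^ 2))) := by
  have h_ratio : x ^ 2 / σ ^ 2 ≤ 1 := div_le_one_of_le₀ (sq_le_sq.mpr h) (sq_nonneg σ)
  rw [Real.exp_le_exp, mul_comm, ← div_div]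
  linarith

theorem exists_mem_Ioc_exp_neg_half_mul_min_le {b σ : ℝ} (hb : 0 < b) (hσ : 0 < σ) :
    ∃ x ∈ Set.Ioc 0 b,
      Real.exp (-1 / 2) * min b σ ≤ x * Real.exp (-(x ^ 2 / (2 * σ ^ 2))) := by
  have h_pos : 0 < min b σ := lt_min hb hσ
  refine ⟨min b σ, ⟨h_pos, min_le_left b σ⟩, ?_⟩
  rw [mul_comm]
  exact mul_le_mul_of_nonneg_left
    (exp_neg_half_le_exp_neg_sq_div (abs_le_abs_of_nonneg h_pos.le (min_le_right b σ))) h_pos.le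

theorem lower_bound_tuning_general {T k τ : ℝ} (hT : 0 < T) (hk : 0 < k) (hτ : 0 < τ) :
    ∃ Δ ∈ Set.Ioc (0 : ℝ) (1 / 8),
      Real.exp (-1 / 2) / 32 * min T √(T * k / τ) ≤
        T * Δ / 4 * Real.exp (-(32 * τ * Δ ^ 2 * T / k)) := by
  set s := √(T * k / τ)
  have hs : 0 < s := Real.sqrt_pos.mpr (by positivity)
  have hs_sq : s ^ 2 = T * k / τ := Real.sq_sqrt (by positivity)
  obtain ⟨Δ, hΔ, hΔ_le⟩ := exists_mem_Ioc_exp_neg_half_mul_min_le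
    (b := 1 / 8) (σ := s / (8 * T)) (by norm_num) (by positivity)
  have h_min : min (1 / 8) (s / (8 * T)) = min T s / (8 * T) := by
    rw [← min_div_div_right (by positivity)]
    congr 1
    field_simp
  have h_exponent : Δ ^ 2 / (2 * (s / (8 * T)) ^ 2) = 32 * τ * Δ ^ 2 * T / k := by
    rw [div_pow, hs_sq]
    field_simp
    ring
  rw [h_min, h_exponent] at hΔ_le
  refine ⟨Δ, hΔ, ?_⟩
  calc Real.exp (-1 / 2) / 32 * min T s
      = T / 4 * (Real.exp (-1 / 2) * (min T s / (8 * T))) := by field_simp; norm_num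
    _ ≤ T / 4 * (Δ * Real.exp (-(32 * τ * Δ ^ 2 * T / k))) := by gcongr
    _ = T * Δ / 4 * Real.exp (-(32 * τ * Δ ^ 2 * T / k)) := by ring

theorem lower_bound_tuning (T K : ℕ) (hT : 1 ≤ T) (hK : 2 ≤ K)
    (τ : ℝ) (hτ : τ ∈ Set.Ioc (0 : ℝ) 1) :
    ∃ Δ : ℝ, Δ ∈ Set.Ioc (0 : ℝ) (1 / 8) ∧
      (T * Δ / 4) * Real.exp (-(32 * τ * Δ ^ 2 * T / (K - 1))) ≥
        (1 / 128) * min (T : ℝ) (Real.sqrt (T * (K - 1) / τ)) := by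
  obtain ⟨Δ, hΔ, h⟩ := lower_bound_tuning_general
    (Nat.cast_pos.mpr hT) (sub_pos.mpr (Nat.one_lt_cast.mpr hK)) hτ.1
  exact ⟨Δ, hΔ, h.trans' <| mul_le_mul_of_nonneg_right
    (by linarith [Real.add_one_le_exp (-1 / 2)]) (by positivity)⟩
end

section
/- There is a universal constant c > 0 with the following property. Let T ≥ 1 and K ≥ 2 be integers and τ ∈ (0,1). Consider the K-armed censored Bernoulli bandit: an environment is a vector μ ∈ [0,1]^K; a policy is a sequence of measurable maps π_t : ([K] × {0,1})^{t−1} × [0,1]^t → [K] (the last argument being an exogenous i.i.d. Uniform([0,1]) randomization sequence U_1,…,U_t); at each round t the policy selects arm k_t = π_t((k_1,Z_1),…,(k_{t−1},Z_{t−1}), U_1,…,U_t) and, conditionally on the past, observes Z_t ∈ {0,1} distributed as Bernoulli(τ·μ_{k_t}). The regret is R(T,μ) = Σ_{t=1}^T (max_{k} μ_k − 𝔼[μ_{k_t}]). Then for every policy there exists μ ∈ [0,1]^K such that R(T,μ) ≥ c · min( T, √(T K/τ) ). -/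
open MeasureTheory Finset

/-- The uniform probability measure on `[0,1] ⊆ ℝ`. -/
noncomputable def unifI : Measure ℝ := volume.restrict (Set.Icc 0 1)

/-- The trajectory of a policy `π` interacting with the censored Bernoulli bandit with
censoring probability `τ` and mean vector `μ`, driven by the exogenous randomness
`W` (used to generate the censored Bernoulli observations `Z_t = 1{W_t ≤ τ·μ_{k_t}}`)
and `U` (the policy's own randomization sequence).  `traj π τ μ W U t` is the pair
`(k_{t+1}, Z_{t+1})` of the arm pulled and the observation received at round `t+1`
(rounds are indexed from `0` here). -/
noncomputable def traj {K : ℕ}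
    (π : (t : ℕ) → (Fin t → Fin K × Bool) → (Fin (t + 1) → ℝ) → Fin K)
    (τ : ℝ) (μ : Fin K → ℝ) (W U : ℕ → ℝ) : ℕ → Fin K × Bool
  | t =>
    let k := π t (fun s => traj π τ μ W U s.1) (fun s => U s.1)
    (k, if W t ≤ τ * μ k then true else false)
decreasing_by exact s.2

/-!
Compare the environment in which every mean is `1/2` with the `K` environments in which the mean of
a single arm is raised by `Δ`.  The relative entropy between the laws of the observations is the
expected number of pulls of the raised arm in the flat environment, times
`kl(Ber(τ/2), Ber(τ/2 + τΔ)) ≤ 8 τ Δ²`.  The pulls add up to `T`, so averaging over the raised arm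
bounds these entropies on average by `8 T τ Δ² / K`; if `Δ` is a small multiple of
`min(1, √(K/(T τ)))`, some raised arm is still pulled at most `3T/4` times in expectation in its own
environment, and the regret there is at least `T Δ / 4`.
-/

/-! ### Relative entropy on finite types -/

/-- The relative entropy (Kullback–Leibler divergence) of two probability vectors on a finite type,
as a real number; it is only meaningful when `Q` does not vanish on the support of `P`. -/
noncomputable def relEntropy {Ω : Type*} [Fintype Ω] (P Q : Ω → ℝ) : ℝ :=
  ∑ x, P x * Real.log (P x / Q x)

lemma relEntropy_self {Ω : Type*} [Fintype Ω] {P : Ω → ℝ} (hP : ∀ x, 0 < P x) :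
    relEntropy P P = 0 :=
  Finset.sum_eq_zero fun x _ => by rw [div_self (hP x).ne', Real.log_one, mul_zero]

lemma sq_sqrt_sub_sqrt_le_mul_log {a b : ℝ} (ha : 0 < a) (hb : 0 < b) :
    (√b - √a) ^ 2 ≤ a * Real.log (a / b) + (b - a) := by
  have hlog : Real.log (b / a) ≤ 2 * (√b / √a - 1) := by
    have h := Real.log_le_sub_one_of_pos (div_pos (Real.sqrt_pos.2 hb) (Real.sqrt_pos.2 ha))
    rw [← Real.sqrt_div hb.le, Real.log_sqrt (div_pos hb ha).le, Real.sqrt_div hb.le] at h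
    linarith
  have hmul : a * (√b / √a) = √a * √b := by
    rw [mul_div_assoc', mul_div_right_comm, Real.div_sqrt]
  have hinv : Real.log (a / b) = -Real.log (b / a) := by rw [← Real.log_inv, inv_div]
  calc (√b - √a) ^ 2 = b + a - 2 * (√a * √b) := by
        rw [sub_sq, Real.sq_sqrt hb.le, Real.sq_sqrt ha.le]; ring
    _ = -(a * (2 * (√b / √a - 1))) + (b - a) := by rw [← hmul]; ring
    _ ≤ -(a * Real.log (b / a)) + (b - a) := by gcongr
    _ = a * Real.log (a / b) + (b - a) := by rw [hinv, mul_neg]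

lemma abs_sub_le_mul_sq_sqrt_sub_sqrt {a b c : ℝ} (ha : 0 ≤ a) (hb : 0 ≤ b) (hc : 0 < c) :
    |b - a| ≤ c * (√b - √a) ^ 2 + (a + b) / (2 * c) := by
  have hfactor : |b - a| = |√b - √a| * (√b + √a) := by
    rw [← abs_of_nonneg (by positivity : 0 ≤ √b + √a), ← abs_mul, mul_comm, ← sq_sub_sq,
      Real.sq_sqrt hb, Real.sq_sqrt ha]
  -- AM-GM, then `(√b + √a)² ≤ 2 (a + b)`
  have hamgm : |√b - √a| * (√b + √a) ≤ c * |√b - √a| ^ 2 + (√b + √a) ^ 2 / (4 * c) := by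
    have h : c * |√b - √a| ^ 2 + (√b + √a) ^ 2 / (4 * c) - |√b - √a| * (√b + √a)
        = (2 * c * |√b - √a| - (√b + √a)) ^ 2 / (4 * c) := by field_simp; ring
    have : 0 ≤ (2 * c * |√b - √a| - (√b + √a)) ^ 2 / (4 * c) := by positivity
    linarith
  have hsum : (√b + √a) ^ 2 ≤ 2 * (a + b) := by
    calc (√b + √a) ^ 2 ≤ 2 * (√b ^ 2 + √a ^ 2) := add_sq_le
      _ = 2 * (a + b) := by rw [Real.sq_sqrt hb, Real.sq_sqrt ha, add_comm a]
  calc |b - a| = |√b - √a| * (√b + √a) := hfactor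
    _ ≤ c * |√b - √a| ^ 2 + (√b + √a) ^ 2 / (4 * c) := hamgm
    _ ≤ c * |√b - √a| ^ 2 + 2 * (a + b) / (4 * c) := by gcongr
    _ = c * (√b - √a) ^ 2 + (a + b) / (2 * c) := by rw [sq_abs]; field_simp; ring

/-- Pinsker's inequality, with the square root of the entropy linearised by the parameter `c`. -/
lemma sum_mul_le_sum_mul_add_relEntropy {Ω : Type*} [Fintype Ω] {P Q f : Ω → ℝ} {B c : ℝ}
    (hP : ∀ x, 0 < P x) (hQ : ∀ x, 0 < Q x) (hP1 : ∑ x, P x = 1) (hQ1 : ∑ x, Q x = 1)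
    (hf : ∀ x, f x ∈ Set.Icc 0 B) (hc : 0 < c) :
    ∑ x, Q x * f x ≤ ∑ x, P x * f x + B * (c * relEntropy P Q + 1 / c) := by
  have hpoint : ∀ x, Q x * f x ≤ P x * f x +
      B * (c * (P x * Real.log (P x / Q x) + (Q x - P x)) + (P x + Q x) / (2 * c)) := fun x => by
    have habs : |Q x - P x| ≤
        c * (P x * Real.log (P x / Q x) + (Q x - P x)) + (P x + Q x) / (2 * c) :=
      (abs_sub_le_mul_sq_sqrt_sub_sqrt (hP x).le (hQ x).le hc).trans <| by
        gcongr; exact sq_sqrt_sub_sqrt_le_mul_log (hP x) (hQ x)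
    calc Q x * f x = P x * f x + (Q x - P x) * f x := by ring
      _ ≤ P x * f x + |Q x - P x| * B :=
        add_le_add_right (mul_le_mul (le_abs_self _) (hf x).2 (hf x).1 (abs_nonneg _)) _
      _ = P x * f x + B * |Q x - P x| := by rw [mul_comm B]
      _ ≤ _ := by gcongr; exact (hf x).1.trans (hf x).2
  calc ∑ x, Q x * f x
    _ ≤ ∑ x, (P x * f x +
        B * (c * (P x * Real.log (P x / Q x) + (Q x - P x)) + (P x + Q x) / (2 * c))) :=
      Finset.sum_le_sum fun x _ => hpoint x
    _ = ∑ x, P x * f x + B * (c * relEntropy P Q + 1 / c) := by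
      simp only [relEntropy, Finset.sum_add_distrib, ← Finset.mul_sum, ← Finset.sum_div,
        Finset.sum_sub_distrib, hP1, hQ1]
      field_simp
      ring

/-! ### Bernoulli sequences with adapted parameters -/

/-- The probability that a Bernoulli variable of parameter `p` takes the value `b`. -/
def bernoulliWeight (p : ℝ) (b : Bool) : ℝ := if b then p else 1 - p

lemma bernoulliWeight_pos {p : ℝ} (hp : p ∈ Set.Ioo 0 1) (b : Bool) : 0 < bernoulliWeight p b := by
  cases b
  exacts [sub_pos.2 hp.2, hp.1]

lemma sum_bernoulliWeight (p : ℝ) : ∑ b, bernoulliWeight p b = 1 := by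
  simp [bernoulliWeight]

lemma relEntropy_bernoulliWeight_le {p q : ℝ} (hp : p ∈ Set.Ioo 0 1) (hq : q ∈ Set.Ioo 0 1) :
    relEntropy (bernoulliWeight p) (bernoulliWeight q) ≤ (p - q) ^ 2 / (q * (1 - q)) := by
  have hp' : 0 < 1 - p := sub_pos.2 hp.2
  have hq' : 0 < 1 - q := sub_pos.2 hq.2
  calc relEntropy (bernoulliWeight p) (bernoulliWeight q)
    _ = p * Real.log (p / q) + (1 - p) * Real.log ((1 - p) / (1 - q)) := by
      simp [relEntropy, bernoulliWeight]
    _ ≤ p * (p / q - 1) + (1 - p) * ((1 - p) / (1 - q) - 1) := by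
      gcongr
      exacts [hp.1.le, Real.log_le_sub_one_of_pos (div_pos hp.1 hq.1),
        Real.log_le_sub_one_of_pos (div_pos hp' hq')]
    _ = (p - q) ^ 2 / (q * (1 - q)) := by
      have := hq.1.ne'
      field_simp
      ring

section Likelihood

variable {ι : Type*} [Fintype ι]

/-- The weight of the binary sequence `z` when its `i`-th entry is drawn from the Bernoulli law of
parameter `p i`.  For a sequential experiment the parameters are those met along `z`, and this is
the likelihood of `z`. -/
def bernoulliLikelihood (p : ι → ℝ) (z : ι → Bool) : ℝ := ∏ i, bernoulliWeight (p i) (z i)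

lemma bernoulliLikelihood_pos {p : ι → ℝ} (hp : ∀ i, p i ∈ Set.Ioo 0 1) (z : ι → Bool) :
    0 < bernoulliLikelihood p z :=
  Finset.prod_pos fun i _ => bernoulliWeight_pos (hp i) (z i)

lemma log_bernoulliLikelihood_div {p q : ι → ℝ} (hp : ∀ i, p i ∈ Set.Ioo 0 1)
    (hq : ∀ i, q i ∈ Set.Ioo 0 1) (z : ι → Bool) :
    Real.log (bernoulliLikelihood p z / bernoulliLikelihood q z) =
      ∑ i, Real.log (bernoulliWeight (p i) (z i) / bernoulliWeight (q i) (z i)) := by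
  rw [bernoulliLikelihood, bernoulliLikelihood, ← Finset.prod_div_distrib, Real.log_prod]
  exact fun i _ =>
    (div_pos (bernoulliWeight_pos (hp i) _) (bernoulliWeight_pos (hq i) _)).ne'

variable [DecidableEq ι]

lemma sum_bernoulliLikelihood (p : ι → ℝ) : ∑ z, bernoulliLikelihood p z = 1 := by
  simp only [bernoulliLikelihood, ← Fintype.prod_sum, sum_bernoulliWeight, Finset.prod_const_one]

lemma bernoulliLikelihood_update (p : ι → ℝ) (z : ι → Bool) (i : ι) (b : Bool) :
    bernoulliLikelihood p (Function.update z i b) =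
      bernoulliWeight (p i) b * ∏ j ∈ Finset.univ.erase i, bernoulliWeight (p j) (z j) := by
  rw [bernoulliLikelihood, ← Finset.mul_prod_erase _ _ (Finset.mem_univ i), Function.update_self]
  congr 1
  refine Finset.prod_congr rfl fun j hj => ?_
  rw [Function.update_of_ne (Finset.ne_of_mem_erase hj)]

lemma sum_bernoulliLikelihood_mul_apply (p : ι → ℝ) (i : ι) {f : (ι → Bool) → Bool → ℝ}
    (hf : ∀ z b, f (Function.update z i b) = f z) :
    ∑ z, bernoulliLikelihood p z * f z (z i) =
      ∑ z, bernoulliLikelihood p z * ∑ b, bernoulliWeight (p i) b * f z b := by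
  rw [← sub_eq_zero, ← Finset.sum_sub_distrib]
  -- the contributions of `z` and of `z` with its `i`-th entry flipped cancel
  refine Finset.sum_involution (fun z _ => Function.update z i (!z i)) (fun z _ => ?_)
    (fun z _ _ hz => by simpa using congrFun hz i) (fun _ _ => Finset.mem_univ _)
    (fun z _ => by simp)
  have hz := bernoulliLikelihood_update p z i (z i)
  rw [Function.update_eq_self] at hz
  rw [bernoulliLikelihood_update, hz, hf, Function.update_self]
  cases z i <;> simp [bernoulliWeight] <;> ring

lemma relEntropy_bernoulliLikelihood {p : ι → ℝ} {q : (ι → Bool) → ι → ℝ}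
    (hp : ∀ i, p i ∈ Set.Ioo 0 1) (hq : ∀ z i, q z i ∈ Set.Ioo 0 1)
    (hq_update : ∀ z i b, q (Function.update z i b) i = q z i) :
    relEntropy (bernoulliLikelihood p) (fun z => bernoulliLikelihood (q z) z) =
      ∑ z, bernoulliLikelihood p z *
        ∑ i, relEntropy (bernoulliWeight (p i)) (bernoulliWeight (q z i)) := by
  calc relEntropy (bernoulliLikelihood p) (fun z => bernoulliLikelihood (q z) z)
    _ = ∑ i, ∑ z, bernoulliLikelihood p z *
          Real.log (bernoulliWeight (p i) (z i) / bernoulliWeight (q z i) (z i)) := by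
      rw [Finset.sum_comm]
      simp only [relEntropy, log_bernoulliLikelihood_div hp (hq _), Finset.mul_sum]
    _ = ∑ i, ∑ z, bernoulliLikelihood p z *
          relEntropy (bernoulliWeight (p i)) (bernoulliWeight (q z i)) :=
      Finset.sum_congr rfl fun i _ => sum_bernoulliLikelihood_mul_apply p i
        (f := fun z b => Real.log (bernoulliWeight (p i) b / bernoulliWeight (q z i) b))
        fun z b => by rw [hq_update]
    _ = _ := by
      rw [Finset.sum_comm]
      simp only [Finset.mul_sum]

end Likelihood

/-! ### Counting pulls -/

/-- The number of rounds in which the sequence of arms `a` plays the arm `k`. -/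
def pullCount {ι α : Type*} [Fintype ι] [DecidableEq α] (a : ι → α) (k : α) : ℕ := #{i | a i = k}

section PullCount

variable {ι α : Type*} [Fintype ι] [DecidableEq α]

lemma cast_pullCount (a : ι → α) (k : α) :
    (pullCount a k : ℝ) = ∑ i, if a i = k then 1 else 0 :=
  Finset.natCast_card_filter _ _

lemma cast_pullCount_mem_Icc (a : ι → α) (k : α) :
    (pullCount a k : ℝ) ∈ Set.Icc 0 (Fintype.card ι : ℝ) :=
  ⟨Nat.cast_nonneg _, Nat.cast_le.2 (Finset.card_le_univ _)⟩

lemma sum_cast_pullCount [Fintype α] (a : ι → α) :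
    ∑ k, (pullCount a k : ℝ) = Fintype.card ι := by
  have hcard : ∑ k, pullCount a k = Fintype.card ι :=
    (Finset.card_eq_sum_card_fiberwise fun i _ => Finset.mem_univ (a i)).symm
  exact_mod_cast hcard

variable [DecidableEq ι]

lemma relEntropy_bernoulliLikelihood_ite {a : (ι → Bool) → ι → α}
    (ha : ∀ z i b, a (Function.update z i b) i = a z i) {p q : ℝ} (hp : p ∈ Set.Ioo 0 1)
    (hq : q ∈ Set.Ioo 0 1) (k : α) :
    relEntropy (bernoulliLikelihood fun _ => p)
        (fun z => bernoulliLikelihood (fun i => if a z i = k then q else p) z) =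
      relEntropy (bernoulliWeight p) (bernoulliWeight q) *
        ∑ z, bernoulliLikelihood (fun _ => p) z * pullCount (a z) k := by
  have hterm : ∀ z i, relEntropy (bernoulliWeight p) (bernoulliWeight (if a z i = k then q else p))
      = relEntropy (bernoulliWeight p) (bernoulliWeight q) * if a z i = k then 1 else 0 := by
    intro z i
    split_ifs
    · rw [mul_one]
    · rw [mul_zero, relEntropy_self (bernoulliWeight_pos hp)]
  rw [relEntropy_bernoulliLikelihood (fun _ => hp) (fun z i => by split_ifs <;> assumption)
    (fun z i b => by rw [ha])]
  simp only [hterm, ← Finset.mul_sum, ← cast_pullCount, mul_left_comm _ (relEntropy _ _)]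

lemma sum_sum_bernoulliLikelihood_mul_pullCount_le [Fintype α] {a : (ι → Bool) → ι → α}
    (ha : ∀ z i b, a (Function.update z i b) i = a z i) {p q c : ℝ} (hp : p ∈ Set.Ioo 0 1)
    (hq : q ∈ Set.Ioo 0 1) (hc : 0 < c)
    (hsum : ∀ k, ∑ z, bernoulliLikelihood (fun i => if a z i = k then q else p) z = 1) :
    ∑ k, ∑ z, bernoulliLikelihood (fun i => if a z i = k then q else p) z * pullCount (a z) k ≤
      Fintype.card ι * (1 + c * (relEntropy (bernoulliWeight p) (bernoulliWeight q) *
        Fintype.card ι) + Fintype.card α / c) := by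
  set n := (Fintype.card ι : ℝ)
  set D : ℝ := relEntropy (bernoulliWeight p) (bernoulliWeight q)
  set N₀ : α → ℝ := fun k => ∑ z, bernoulliLikelihood (fun _ => p) z * pullCount (a z) k
  have hN₀ : ∑ k, N₀ k = n := by
    rw [Finset.sum_comm]
    simp only [← Finset.mul_sum, sum_cast_pullCount, ← Finset.sum_mul, sum_bernoulliLikelihood,
      one_mul, n]
  have hpinsker : ∀ k,
      ∑ z, bernoulliLikelihood (fun i => if a z i = k then q else p) z * pullCount (a z) k ≤
        N₀ k + n * (c * (D * N₀ k) + 1 / c) := fun k => by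
    rw [← relEntropy_bernoulliLikelihood_ite ha hp hq k]
    exact sum_mul_le_sum_mul_add_relEntropy (bernoulliLikelihood_pos fun _ => hp)
      (fun z => bernoulliLikelihood_pos (fun i => by split_ifs <;> assumption) z)
      (sum_bernoulliLikelihood _) (hsum k) (fun z => cast_pullCount_mem_Icc (a z) k) hc
  calc _ ≤ ∑ k, (N₀ k + n * (c * (D * N₀ k) + 1 / c)) := Finset.sum_le_sum fun k _ => hpinsker k
    _ = n * (1 + c * (D * n) + Fintype.card α / c) := by
      simp only [Finset.sum_add_distrib, ← Finset.mul_sum, hN₀, Finset.sum_const,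
        Finset.card_univ, nsmul_eq_mul]
      ring

end PullCount

/-! ### Trajectories -/

/-- The policies of the `K`-armed binary bandit: the arm played at round `t` is a function of the
history and of the first `t + 1` terms of the randomization sequence. -/
abbrev Policy (K : ℕ) : Type :=
  (t : ℕ) → (Fin t → Fin K × Bool) → (Fin (t + 1) → ℝ) → Fin K

/-- A policy is measurable if, at every round and for every history, the set of randomizations on
which it plays a given arm is measurable. -/
def Policy.IsMeasurable {K : ℕ} (π : Policy K) : Prop :=
  ∀ (t : ℕ) (h : Fin t → Fin K × Bool) (k : Fin K), MeasurableSet {u | π t h u = k}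

/-- The infinite sequence which starts with `z` and continues with the constant `d`; `traj` reads
infinite sequences, of which only the first `T` terms matter. -/
def padWith {α : Type*} {T : ℕ} (d : α) (z : Fin T → α) (n : ℕ) : α :=
  if h : n < T then z ⟨n, h⟩ else d

lemma padWith_val {α : Type*} {T : ℕ} (d : α) (z : Fin T → α) (t : Fin T) :
    padWith d z t = z t :=
  dif_pos t.2

lemma measurable_padWith {α : Type*} [MeasurableSpace α] {T : ℕ} (d : α) (n : ℕ) :
    Measurable fun z : Fin T → α => padWith d z n := by
  unfold padWith
  split_ifs
  exacts [measurable_pi_apply _, measurable_const]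

section Trajectories

variable {K : ℕ} (π : Policy K) (τ : ℝ) (μ : Fin K → ℝ)

/-- The arm played at round `t` by a policy that is shown the observations `z`. -/
def replayArm (U : ℕ → ℝ) (z : ℕ → Bool) : ℕ → Fin K
  | t => π t (fun s => (replayArm U z s.1, z s)) (fun s => U s.1)
decreasing_by exact s.2

lemma replayArm_congr (U : ℕ → ℝ) {z z' : ℕ → Bool} {t : ℕ} (h : ∀ s < t, z s = z' s) :
    replayArm π U z t = replayArm π U z' t := by
  induction t using Nat.strong_induction_on with
  | _ t ih =>
    rw [replayArm, replayArm]
    congr 1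
    funext s
    rw [ih s s.2 fun r hr => h r (hr.trans s.2), h s s.2]

lemma traj_fst (W U : ℕ → ℝ) (t : ℕ) :
    (traj π τ μ W U t).1 = π t (fun s => traj π τ μ W U s.1) (fun s => U s.1) := by
  rw [traj]

lemma traj_snd (W U : ℕ → ℝ) (t : ℕ) :
    (traj π τ μ W U t).2 = decide (W t ≤ τ * μ (traj π τ μ W U t).1) := by
  rw [traj]
  simp only [Bool.if_true_left, Bool.or_false]

lemma traj_fst_eq_replayArm {W U : ℕ → ℝ} {z : ℕ → Bool} {t : ℕ}
    (h : ∀ s < t, (traj π τ μ W U s).2 = z s) :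
    (traj π τ μ W U t).1 = replayArm π U z t := by
  induction t using Nat.strong_induction_on with
  | _ t ih =>
    rw [traj_fst, replayArm]
    congr 1
    funext s
    exact Prod.ext (ih s s.2 fun r hr => h r (hr.trans s.2)) (h s s.2)

lemma forall_traj_snd_eq_iff {W U : ℕ → ℝ} {z : ℕ → Bool} {T : ℕ} :
    (∀ t < T, (traj π τ μ W U t).2 = z t) ↔
      ∀ t < T, decide (W t ≤ τ * μ (replayArm π U z t)) = z t := by
  constructor <;> intro h t ht
  · rw [← traj_fst_eq_replayArm π τ μ fun s hs => h s (hs.trans ht), ← traj_snd, h t ht]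
  · induction t using Nat.strong_induction_on with
    | _ t ih =>
      rw [traj_snd, traj_fst_eq_replayArm π τ μ fun s hs => ih s hs (hs.trans ht), h t ht]

variable {T : ℕ}

/-- The arms played during `T` rounds when the randomness of the observations is `ω.1` and that of
the policy is `ω.2`. -/
noncomputable def playedArms (ω : (Fin T → ℝ) × (Fin T → ℝ)) (t : Fin T) : Fin K :=
  (traj π τ μ (padWith 0 ω.1) (padWith 0 ω.2) t).1

/-- The observations made along `playedArms`. -/
noncomputable def observations (ω : (Fin T → ℝ) × (Fin T → ℝ)) (t : Fin T) : Bool :=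
  (traj π τ μ (padWith 0 ω.1) (padWith 0 ω.2) t).2

/-- The finite-horizon version of `replayArm`. -/
def replayArms (u : Fin T → ℝ) (z : Fin T → Bool) (t : Fin T) : Fin K :=
  replayArm π (padWith 0 u) (padWith false z) t

lemma replayArms_update (u : Fin T → ℝ) (z : Fin T → Bool) (t : Fin T) (b : Bool) :
    replayArms π u (Function.update z t b) t = replayArms π u z t := by
  refine replayArm_congr π _ fun s hs => ?_
  obtain ⟨s, rfl⟩ : ∃ s' : Fin T, s = s' := ⟨⟨s, hs.trans t.2⟩, rfl⟩
  rw [padWith_val, padWith_val, Function.update_of_ne (Fin.ne_of_lt hs)]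

lemma playedArms_eq_replayArms (ω : (Fin T → ℝ) × (Fin T → ℝ)) :
    playedArms π τ μ ω = replayArms π ω.2 (observations π τ μ ω) := by
  funext t
  exact traj_fst_eq_replayArm π τ μ fun s hs =>
    (padWith_val false (observations π τ μ ω) ⟨s, hs.trans t.2⟩).symm

lemma observations_eq_iff {W u : Fin T → ℝ} {z : Fin T → Bool} :
    observations π τ μ (W, u) = z ↔
      ∀ t, decide (W t ≤ τ * μ (replayArms π u z t)) = z t := by
  rw [funext_iff, Fin.forall_iff, Fin.forall_iff]
  have h := forall_traj_snd_eq_iff π τ μ (W := padWith 0 W) (U := padWith 0 u)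
    (z := padWith false z) (T := T)
  refine Iff.trans (forall₂_congr fun t ht => ?_) (h.trans (forall₂_congr fun t ht => ?_))
  · rw [observations, ← padWith_val false z]
  · rw [replayArms, ← padWith_val 0 W, ← padWith_val false z]

end Trajectories

/-! ### The law of the observations -/

instance isProbabilityMeasure_unifI : IsProbabilityMeasure unifI := ⟨by simp [unifI]⟩

/-- The uniform law on `[0,1]^T`. -/
noncomputable abbrev unifCube (T : ℕ) : Measure (Fin T → ℝ) := Measure.pi fun _ => unifI

lemma setOf_decide_le_eq (q : ℝ) (b : Bool) :
    {w : ℝ | decide (w ≤ q) = b} = if b then Set.Iic q else (Set.Iic q)ᶜ := by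
  ext
  cases b <;> simp

lemma measurableSet_decide_le_eq (q : ℝ) (b : Bool) :
    MeasurableSet {w : ℝ | decide (w ≤ q) = b} := by
  rw [setOf_decide_le_eq]
  split_ifs
  exacts [measurableSet_Iic, measurableSet_Iic.compl]

lemma unifI_real_Iic {q : ℝ} (hq : q ∈ Set.Icc 0 1) : unifI.real (Set.Iic q) = q := by
  have hinter : Set.Iic q ∩ Set.Icc 0 1 = Set.Icc 0 q := by
    rw [← Set.Ici_inter_Iic, Set.inter_left_comm, Set.Iic_inter_Iic, min_eq_left hq.2,
      Set.Ici_inter_Iic]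
  rw [unifI, measureReal_restrict_apply measurableSet_Iic, hinter,
    Real.volume_real_Icc_of_le hq.1, sub_zero]

lemma unifI_real_decide_le_eq {q : ℝ} (hq : q ∈ Set.Icc 0 1) (b : Bool) :
    unifI.real {w | decide (w ≤ q) = b} = bernoulliWeight q b := by
  rw [setOf_decide_le_eq, bernoulliWeight]
  split_ifs
  · exact unifI_real_Iic hq
  · rw [probReal_compl_eq_one_sub measurableSet_Iic, unifI_real_Iic hq]

section Law

variable {K T : ℕ} (π : Policy K) (τ : ℝ) (μ : Fin K → ℝ) (u : Fin T → ℝ)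

lemma setOf_observations_eq (z : Fin T → Bool) :
    {W | observations π τ μ (W, u) = z} =
      Set.univ.pi fun t => {w | decide (w ≤ τ * μ (replayArms π u z t)) = z t} := by
  ext W
  simp only [observations_eq_iff, Set.mem_univ_pi, Set.mem_ofPred_eq]

lemma measurable_observations_left : Measurable fun W => observations π τ μ (W, u) :=
  measurable_to_countable' fun z => by
    change MeasurableSet {W | observations π τ μ (W, u) = z}
    rw [setOf_observations_eq]
    exact MeasurableSet.univ_pi fun t => measurableSet_decide_le_eq _ _

variable {τ μ}

lemma unifCube_real_observations_eq (hμ : ∀ k, τ * μ k ∈ Set.Icc 0 1) (z : Fin T → Bool) :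
    (unifCube T).real {W | observations π τ μ (W, u) = z} =
      bernoulliLikelihood (fun t => τ * μ (replayArms π u z t)) z := by
  rw [setOf_observations_eq, measureReal_def, Measure.pi_pi, ENNReal.toReal_prod]
  exact Finset.prod_congr rfl fun t _ => unifI_real_decide_le_eq (hμ _) _

lemma integral_observations (hμ : ∀ k, τ * μ k ∈ Set.Icc 0 1) (g : (Fin T → Bool) → ℝ) :
    ∫ W, g (observations π τ μ (W, u)) ∂unifCube T =
      ∑ z, bernoulliLikelihood (fun t => τ * μ (replayArms π u z t)) z * g z := by
  have hobs := measurable_observations_left π τ μ u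
  have := Measure.isProbabilityMeasure_map (μ := unifCube T) hobs.aemeasurable
  rw [← integral_map (φ := fun W => observations π τ μ (W, u)) hobs.aemeasurable
    (Measurable.of_discrete (f := g)).aestronglyMeasurable, integral_fintype Integrable.of_finite]
  refine Finset.sum_congr rfl fun z _ => ?_
  rw [map_measureReal_apply hobs (measurableSet_singleton z), smul_eq_mul,
    ← unifCube_real_observations_eq π u hμ]
  rfl

lemma sum_bernoulliLikelihood_replayArms (hμ : ∀ k, τ * μ k ∈ Set.Icc 0 1) :
    ∑ z, bernoulliLikelihood (fun t => τ * μ (replayArms π u z t)) z = 1 := by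
  simpa using (integral_observations π u hμ fun _ => 1).symm

end Law

section Integrability

variable {K T : ℕ} {π : Policy K} (hπ : π.IsMeasurable) (τ : ℝ) (μ : Fin K → ℝ)
include hπ

lemma Policy.IsMeasurable.measurable_uncurry (t : ℕ) :
    Measurable fun x : (Fin t → Fin K × Bool) × (Fin (t + 1) → ℝ) => π t x.1 x.2 :=
  measurable_from_prod_countable_right fun h => measurable_to_countable' (hπ t h)

lemma measurable_traj (t : ℕ) :
    Measurable fun ω : (Fin T → ℝ) × (Fin T → ℝ) =>
      traj π τ μ (padWith 0 ω.1) (padWith 0 ω.2) t := by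
  induction t using Nat.strong_induction_on with
  | _ t ih =>
    have hfst : Measurable fun ω : (Fin T → ℝ) × (Fin T → ℝ) =>
        (traj π τ μ (padWith 0 ω.1) (padWith 0 ω.2) t).1 := by
      simp_rw [traj_fst]
      exact (hπ.measurable_uncurry t).comp
        ((measurable_pi_lambda _ fun s : Fin t => ih s s.2).prodMk
          (measurable_pi_lambda _ fun s => (measurable_padWith 0 s).comp measurable_snd))
    refine hfst.prod (measurable_to_bool ?_)
    have hobs : MeasurableSet {ω : (Fin T → ℝ) × (Fin T → ℝ) |
        padWith 0 ω.1 t ≤ τ * μ (traj π τ μ (padWith 0 ω.1) (padWith 0 ω.2) t).1} :=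
      measurableSet_le ((measurable_padWith 0 t).comp measurable_fst)
        (((measurable_of_countable μ).comp hfst).const_mul τ)
    simpa only [Set.preimage, Set.mem_singleton_iff, traj_snd, decide_eq_true_eq] using hobs

lemma integrable_comp_playedArms (f : (Fin T → Fin K) → ℝ) :
    Integrable (fun ω => f (playedArms π τ μ ω)) ((unifCube T).prod (unifCube T)) := by
  have hmeas : Measurable (playedArms (T := T) π τ μ) :=
    measurable_pi_lambda _ fun t => (measurable_traj hπ τ μ t).fst
  exact (Integrable.of_finite (f := f)).comp_measurable hmeas

end Integrability

/-! ### Spiked environments -/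

/-- The means of the hard environments: the arm `k` exceeds the common level `1/2` by `Δ`. -/
noncomputable def spikedMean {K : ℕ} (Δ : ℝ) (k j : Fin K) : ℝ := 1 / 2 + if j = k then Δ else 0

/-- The regret over `T` rounds of the policy `π` in the environment `μ`. -/
noncomputable def regret {K : ℕ} (T : ℕ) (π : Policy K) (τ : ℝ) (μ : Fin K → ℝ) : ℝ :=
  ∑ t ∈ Finset.range T, ((⨆ k, μ k) -
    ∫ ω, μ (traj π τ μ (padWith 0 ω.1) (padWith 0 ω.2) t).1 ∂(unifCube T).prod (unifCube T))

section Spiked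

variable {K T : ℕ} {τ Δ : ℝ}

lemma mul_spikedMean (k j : Fin K) :
    τ * spikedMean Δ k j = if j = k then τ * (1 / 2 + Δ) else τ * (1 / 2) := by
  rw [spikedMean]
  split_ifs <;> simp

lemma spikedMean_mem_Icc (hΔ : Δ ∈ Set.Icc 0 (1 / 2)) (k j : Fin K) :
    spikedMean Δ k j ∈ Set.Icc 0 1 := by
  obtain ⟨hΔ0, hΔ1⟩ := hΔ
  rw [spikedMean]
  constructor <;> split_ifs <;> linarith

lemma iSup_spikedMean (hΔ : 0 ≤ Δ) (k : Fin K) : ⨆ j, spikedMean Δ k j = 1 / 2 + Δ := by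
  have : Nonempty (Fin K) := ⟨k⟩
  refine le_antisymm (ciSup_le fun j => ?_) ?_
  · rw [spikedMean]
    split_ifs <;> linarith
  · exact le_ciSup_of_le (Set.finite_range _).bddAbove k (by rw [spikedMean, if_pos rfl])

lemma sum_spikedMean (k : Fin K) (a : Fin T → Fin K) :
    ∑ t, spikedMean Δ k (a t) = T * (1 / 2) + Δ * pullCount a k := by
  simp [spikedMean, Finset.sum_add_distrib, cast_pullCount, Finset.mul_sum, -Finset.sum_boole]

lemma regret_spikedMean {π : Policy K} (hπ : π.IsMeasurable) (hΔ : 0 ≤ Δ) (k : Fin K) :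
    regret T π τ (spikedMean Δ k) =
      Δ * (T - ∫ ω, (pullCount (playedArms π τ (spikedMean Δ k) ω) k : ℝ)
        ∂(unifCube T).prod (unifCube T)) := by
  set P := (unifCube T).prod (unifCube T)
  have hint := integrable_comp_playedArms (T := T) hπ τ (spikedMean Δ k)
  have hreward : ∑ t, ∫ ω, spikedMean Δ k (playedArms π τ (spikedMean Δ k) ω t) ∂P =
      T * (1 / 2) + Δ * ∫ ω, (pullCount (playedArms π τ (spikedMean Δ k) ω) k : ℝ) ∂P := by
    rw [← integral_finsetSum _ fun t _ => hint fun a => spikedMean Δ k (a t)]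
    simp_rw [sum_spikedMean]
    rw [integral_add (integrable_const _) ((hint fun a => (pullCount a k : ℝ)).const_mul Δ),
      integral_const_mul Δ, integral_const, probReal_univ, one_smul]
  calc regret T π τ (spikedMean Δ k)
    _ = ∑ t, ((1 / 2 + Δ) - ∫ ω, spikedMean Δ k (playedArms π τ (spikedMean Δ k) ω t) ∂P) := by
      rw [regret, Finset.sum_range, iSup_spikedMean hΔ]
      rfl
    _ = T * (1 / 2 + Δ) - (T * (1 / 2) +
          Δ * ∫ ω, (pullCount (playedArms π τ (spikedMean Δ k) ω) k : ℝ) ∂P) := by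
      rw [Finset.sum_sub_distrib, hreward, Finset.sum_const, Finset.card_univ, Fintype.card_fin,
        nsmul_eq_mul]
    _ = Δ * (T - ∫ ω, (pullCount (playedArms π τ (spikedMean Δ k) ω) k : ℝ) ∂P) := by ring

lemma mul_half_add_mem_Ioo (hτ : τ ∈ Set.Ioc 0 1) (hΔ : Δ ∈ Set.Ico 0 (1 / 2)) :
    τ * (1 / 2 + Δ) ∈ Set.Ioo 0 1 := by
  obtain ⟨hτ0, hτ1⟩ := hτ
  obtain ⟨hΔ0, hΔ1⟩ := hΔ
  exact ⟨by positivity, (mul_le_of_le_one_left (by linarith) hτ1).trans_lt (by linarith)⟩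

lemma mul_half_mem_Ioo (hτ : τ ∈ Set.Ioc 0 1) : τ * (1 / 2) ∈ Set.Ioo 0 1 := by
  simpa only [add_zero] using mul_half_add_mem_Ioo hτ (Δ := 0) (by simp)

lemma relEntropy_bernoulliWeight_mul_half_le (hτ : τ ∈ Set.Ioc 0 1)
    (hΔ : Δ ∈ Set.Icc 0 (1 / 4)) :
    relEntropy (bernoulliWeight (τ * (1 / 2))) (bernoulliWeight (τ * (1 / 2 + Δ))) ≤
      8 * (τ * Δ ^ 2) := by
  have hp := mul_half_mem_Ioo hτ
  have hq := mul_half_add_mem_Ioo hτ ⟨hΔ.1, hΔ.2.trans_lt (by norm_num)⟩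
  obtain ⟨hτ0, hτ1⟩ := hτ
  obtain ⟨hΔ0, hΔ1⟩ := hΔ
  have hvar : τ / 8 ≤ τ * (1 / 2 + Δ) * (1 - τ * (1 / 2 + Δ)) := by
    have hq' : 1 / 4 ≤ 1 - τ * (1 / 2 + Δ) := by
      linarith [mul_le_of_le_one_left (by linarith : 0 ≤ 1 / 2 + Δ) hτ1]
    calc τ / 8 = τ * (1 / 2 + 0) * (1 / 4) := by ring
      _ ≤ τ * (1 / 2 + Δ) * (1 - τ * (1 / 2 + Δ)) := by gcongr
  calc _ ≤ (τ * (1 / 2) - τ * (1 / 2 + Δ)) ^ 2 / (τ * (1 / 2 + Δ) * (1 - τ * (1 / 2 + Δ))) :=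
        relEntropy_bernoulliWeight_le hp hq
    _ ≤ (τ * (1 / 2) - τ * (1 / 2 + Δ)) ^ 2 / (τ / 8) := by gcongr
    _ = 8 * (τ * Δ ^ 2) := by field_simp; ring

lemma sum_integral_pullCount_spikedMean_le (hK : 2 ≤ K) (hτ : τ ∈ Set.Ioc 0 1)
    (hΔ : Δ ∈ Set.Icc 0 (1 / 4)) (hgap : 512 * T * (τ * Δ ^ 2) ≤ K) (π : Policy K)
    (u : Fin T → ℝ) :
    ∑ k, ∫ W, (pullCount (playedArms π τ (spikedMean Δ k) (W, u)) k : ℝ) ∂unifCube T ≤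
      K * (3 / 4 * T) := by
  have hp := mul_half_mem_Ioo hτ
  have hq := mul_half_add_mem_Ioo hτ ⟨hΔ.1, hΔ.2.trans_lt (by norm_num)⟩
  have hμ : ∀ k j : Fin K, τ * spikedMean Δ k j ∈ Set.Icc 0 1 := fun k j => by
    rw [mul_spikedMean]
    split_ifs
    exacts [Set.Ioo_subset_Icc_self hq, Set.Ioo_subset_Icc_self hp]
  have hsum : ∀ k, ∑ z, bernoulliLikelihood
      (fun t => if replayArms π u z t = k then τ * (1 / 2 + Δ) else τ * (1 / 2)) z = 1 := by
    intro k
    simpa only [mul_spikedMean] using sum_bernoulliLikelihood_replayArms π u (hμ k)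
  have hK' : (2 : ℝ) ≤ K := by exact_mod_cast hK
  calc
    _ = ∑ k, ∑ z, bernoulliLikelihood
        (fun t => if replayArms π u z t = k then τ * (1 / 2 + Δ) else τ * (1 / 2)) z *
          pullCount (replayArms π u z) k := by
      simp only [playedArms_eq_replayArms, ← mul_spikedMean]
      exact Finset.sum_congr rfl fun k _ =>
        integral_observations π u (hμ k) fun z => (pullCount (replayArms π u z) k : ℝ)
    _ ≤ T * (1 + 8 * (relEntropy (bernoulliWeight (τ * (1 / 2)))
          (bernoulliWeight (τ * (1 / 2 + Δ))) * T) + K / 8) := by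
      simpa only [Fintype.card_fin] using sum_sum_bernoulliLikelihood_mul_pullCount_le
        (replayArms_update π u) hp hq (by norm_num : (0 : ℝ) < 8) hsum
    _ ≤ T * (1 + 8 * (8 * (τ * Δ ^ 2) * T) + K / 8) := by
      gcongr
      exact relEntropy_bernoulliWeight_mul_half_le hτ hΔ
    _ ≤ T * (K / 2 + K / 8 + K / 8) := by gcongr <;> linarith
    _ = K * (3 / 4 * T) := by ring

lemma exists_integral_pullCount_spikedMean_le (hK : 2 ≤ K) (hτ : τ ∈ Set.Ioc 0 1)
    (hΔ : Δ ∈ Set.Icc 0 (1 / 4)) (hgap : 512 * T * (τ * Δ ^ 2) ≤ K)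
    {π : Policy K} (hπ : π.IsMeasurable) :
    ∃ k, ∫ ω, (pullCount (playedArms π τ (spikedMean Δ k) ω) k : ℝ)
      ∂(unifCube T).prod (unifCube T) ≤ 3 / 4 * T := by
  have hint : ∀ k, Integrable
      (fun ω => (pullCount (playedArms π τ (spikedMean Δ k) ω) k : ℝ))
      ((unifCube T).prod (unifCube T)) :=
    fun k => integrable_comp_playedArms hπ τ _ fun a => (pullCount a k : ℝ)
  have hsum : ∑ k, ∫ ω, (pullCount (playedArms π τ (spikedMean Δ k) ω) k : ℝ)
      ∂(unifCube T).prod (unifCube T) ≤ ∑ k : Fin K, 3 / 4 * (T : ℝ) := by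
    simp_rw [fun k => integral_prod_symm _ (hint k)]
    rw [← integral_finsetSum _ fun k _ => (hint k).integral_prod_right]
    calc _ ≤ ∫ _, K * (3 / 4 * (T : ℝ)) ∂unifCube T :=
          integral_mono (integrable_finsetSum _ fun k _ => (hint k).integral_prod_right)
            (integrable_const _) fun u => sum_integral_pullCount_spikedMean_le hK hτ hΔ hgap π u
      _ = ∑ k : Fin K, 3 / 4 * (T : ℝ) := by simp
  have hne : (Finset.univ : Finset (Fin K)).Nonempty := ⟨⟨0, by lia⟩, Finset.mem_univ _⟩
  obtain ⟨k, -, hk⟩ := Finset.exists_le_of_sum_le hne hsum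
  exact ⟨k, hk⟩

end Spiked

lemma min_sqrt_eq_mul_min_one_sqrt {T x : ℝ} (hT : 0 ≤ T) :
    min T √(T * x) = T * min 1 √(x / T) := by
  have hsqrt : T * √(x / T) = √(T * x) := by
    rw [← Real.sqrt_sq hT, ← Real.sqrt_mul (sq_nonneg T), Real.sqrt_sq hT]
    rcases hT.eq_or_lt with rfl | hT
    · simp
    · congr 1
      field_simp
  rw [mul_min_of_nonneg _ _ hT, mul_one, hsqrt]

theorem minimax_lower_bound_censored_bandit_general {T K : ℕ} (hK : 2 ≤ K) {τ : ℝ}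
    (hτ : τ ∈ Set.Ioc 0 1) {π : Policy K} (hπ : π.IsMeasurable) :
    ∃ μ : Fin K → ℝ, (∀ k, μ k ∈ Set.Icc 0 1) ∧
      1 / 128 * min (T : ℝ) √(T * K / τ) ≤ regret T π τ μ := by
  have hτ0 : 0 < τ := hτ.1
  set ρ : ℝ := √(K / τ / T)
  set Δ : ℝ := min 1 ρ / 32 with hΔ_def
  have hΔ : Δ ∈ Set.Icc 0 (1 / 4) := ⟨by positivity, by linarith [min_le_left 1 ρ]⟩
  have hgap : 512 * T * (τ * Δ ^ 2) ≤ K := by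
    calc 512 * T * (τ * Δ ^ 2) ≤ (512 * T * (τ * (ρ / 32) ^ 2) : ℝ) := by
          gcongr
          exact div_le_div_of_nonneg_right (min_le_right 1 ρ) (by norm_num)
      _ = K * (T / T) / 2 := by
          rw [div_pow, Real.sq_sqrt (by positivity)]; field
      _ ≤ K * 1 / 2 := by gcongr; exact div_self_le_one _
      _ ≤ K := by linarith [K.cast_nonneg (α := ℝ)]
  obtain ⟨k, hk⟩ := exists_integral_pullCount_spikedMean_le hK hτ hΔ hgap hπ
  refine ⟨spikedMean Δ k, spikedMean_mem_Icc ⟨hΔ.1, hΔ.2.trans (by norm_num)⟩ k, ?_⟩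
  rw [regret_spikedMean hπ hΔ.1, mul_div_assoc, min_sqrt_eq_mul_min_one_sqrt T.cast_nonneg]
  calc 1 / 128 * (T * min 1 ρ) = Δ * (T - 3 / 4 * T) := by rw [hΔ_def]; ring
    _ ≤ _ := mul_le_mul_of_nonneg_left (sub_le_sub_left hk _) hΔ.1

theorem minimax_lower_bound_censored_bandit :
    ∃ c : ℝ, 0 < c ∧
      ∀ (T K : ℕ), 1 ≤ T → 2 ≤ K →
      ∀ τ : ℝ, τ ∈ Set.Ioo (0 : ℝ) 1 →
      ∀ π : (t : ℕ) → (Fin t → Fin K × Bool) → (Fin (t + 1) → ℝ) → Fin K,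
      -- measurability of the policy in its randomization argument
      (∀ (t : ℕ) (h : Fin t → Fin K × Bool) (k : Fin K),
        MeasurableSet {u : Fin (t + 1) → ℝ | π t h u = k}) →
      ∃ μ : Fin K → ℝ, (∀ k, μ k ∈ Set.Icc (0 : ℝ) 1) ∧
        ∑ t ∈ Finset.range T,
            ((⨆ k, μ k) -
              ∫ ω : (Fin T → ℝ) × (Fin T → ℝ),
                μ (traj π τ μ
                    (fun n => if h : n < T then ω.1 ⟨n, h⟩ else 0)
                    (fun n => if h : n < T then ω.2 ⟨n, h⟩ else 0) t).1
                ∂((Measure.pi fun _ : Fin T => unifI).prod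
                    (Measure.pi fun _ : Fin T => unifI))) ≥
          c * min (T : ℝ) (Real.sqrt (T * K / τ)) :=
  ⟨1 / 128, by norm_num, fun _ _ _ hK _ hτ _ hπ =>
    minimax_lower_bound_censored_bandit_general hK (Set.Ioo_subset_Ioc_self hτ) hπ⟩
end
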